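/- Let d ≥ 3, and let u be a finite-energy free wave on ℝ^d with initial data in Ḣ¹ × L². Then lim_{η→+∞} sup_{t>η} ∫_{|x|<t-η} ( |∇u(x,t)|² + |u_t(x,t)|² ) dx = 0. -/

import Mathlib

/-!
Energy conservation reduces the claim, up to an error uniform in `t`, to a family of waves that is
dense in energy among the waves of finite energy. A wave `V` for which `V`, its scaling derivative
`SV = x · ∇V + t ∂ₜV` and the gradients of both are bounded in `L²` uniformly in time belongs to
this family: well inside the light cone `t² |∇V|² - (x · ∇V)²` controls `|∇V|²`, and `SV` recovers
`∂ₜV`; integrating the divergence of `χ V (t² ∇V - (x · ∇V) x)`, with `χ` a cutoff to the cone,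
gives `η ∫_{|x| < t - η} (|∇V|² + V_t²) ≤ K (‖V‖² + ‖dV‖² + ‖SV‖² + ‖dSV‖²)` for all `t > η ≥ 1`.

Such waves are dense. The average of a wave `U` with a distant translate of it has at most `3/4` of
the energy norm of `U`, because the two gradients are almost orthogonal, while its difference from
`U` is bounded in `L²`. Iterating, `U` is close in energy to a wave bounded in `L²`. Averaging that
wave over the dilations `eᵟˢ`, `0 ≤ s ≤ 1`, moves it little in energy, and turns its scaling
derivative into the difference quotient `δ⁻¹ (W(eᵟ z) - W(z))`.
-/

open MeasureTheory Real Filter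

open scoped ENNReal NNReal Topology

namespace FreeWave

section LpTools

variable {α β G : Type*} [MeasurableSpace α] [MeasurableSpace β] [NormedAddCommGroup G]
  {p : ℝ≥0}

lemma rpow_lintegral_le_lintegral_rpow {ν : Measure β} [IsProbabilityMeasure ν] (hp : 1 ≤ p)
    {f : β → ℝ≥0∞} (hf : AEMeasurable f ν) :
    (∫⁻ s, f s ∂ν) ^ (p : ℝ) ≤ ∫⁻ s, f s ^ (p : ℝ) ∂ν := by
  have hp₀ : p ≠ 0 := (zero_lt_one.trans_le hp).ne'
  have h := eLpNorm_le_eLpNorm_of_exponent_le (p := 1) (q := p) (by exact_mod_cast hp)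
    hf.aestronglyMeasurable
  simpa [eLpNorm_nnreal_pow_eq_lintegral hp₀, eLpNorm_one_eq_lintegral_enorm] using
    ENNReal.rpow_le_rpow h p.coe_nonneg

lemma eLpNorm_integral_le [NormedSpace ℝ G] {μ : Measure α} [SFinite μ] {ν : Measure β}
    [IsProbabilityMeasure ν] (hp : 1 ≤ p) {F : α → β → G}
    (hF : AEStronglyMeasurable (Function.uncurry F) (μ.prod ν)) {C : ℝ≥0∞}
    (hC : ∀ᵐ s ∂ν, eLpNorm (fun x => F x s) p μ ≤ C) :
    eLpNorm (fun x => ∫ s, F x s ∂ν) p μ ≤ C := by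
  have hp₀ : p ≠ 0 := (zero_lt_one.trans_le hp).ne'
  have hp₀' : (0 : ℝ) < p := by positivity
  rw [← ENNReal.rpow_le_rpow_iff hp₀', eLpNorm_nnreal_pow_eq_lintegral hp₀]
  calc ∫⁻ x, ‖∫ s, F x s ∂ν‖ₑ ^ (p : ℝ) ∂μ
      ≤ ∫⁻ x, ∫⁻ s, ‖F x s‖ₑ ^ (p : ℝ) ∂ν ∂μ := by
        refine lintegral_mono_ae (hF.prodMk_left.mono fun x hx => ?_)
        grw [enorm_integral_le_lintegral_enorm]
        exact rpow_lintegral_le_lintegral_rpow hp hx.enorm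
    _ = ∫⁻ s, ∫⁻ x, ‖F x s‖ₑ ^ (p : ℝ) ∂μ ∂ν :=
        lintegral_lintegral_swap (hF.enorm.pow_const _)
    _ ≤ ∫⁻ _, C ^ (p : ℝ) ∂ν := by
        refine lintegral_mono_ae (hC.mono fun s hs => ?_)
        rw [← eLpNorm_nnreal_pow_eq_lintegral hp₀]
        gcongr
    _ = C ^ (p : ℝ) := by simp

lemma eLpNorm_intervalIntegral_le [NormedSpace ℝ G] [TopologicalSpace α] [OpensMeasurableSpace α]
    [SecondCountableTopology α] {μ : Measure α} [SFinite μ] (hp : 1 ≤ p)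
    {F : α → ℝ → G} (hF : Continuous (Function.uncurry F)) {C : ℝ≥0∞}
    (hC : ∀ s ∈ Set.Icc (0 : ℝ) 1, eLpNorm (fun x => F x s) p μ ≤ C) :
    eLpNorm (fun x => ∫ s in (0 : ℝ)..1, F x s) p μ ≤ C := by
  have : IsProbabilityMeasure (volume.restrict (Set.Ioc (0 : ℝ) 1)) := ⟨by simp⟩
  simp only [intervalIntegral.integral_of_le zero_le_one]
  refine eLpNorm_integral_le hp hF.aestronglyMeasurable ?_
  filter_upwards [ae_restrict_mem measurableSet_Ioc] with s hs
  exact hC s (Set.Ioc_subset_Icc_self hs)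

lemma eLpNorm_add_rpow_of_disjoint_support {μ : Measure α} (hp : p ≠ 0) {f g : α → G}
    (hf : AEStronglyMeasurable f μ) (hfg : Disjoint (Function.support f) (Function.support g)) :
    eLpNorm (f + g) p μ ^ (p : ℝ) = eLpNorm f p μ ^ (p : ℝ) + eLpNorm g p μ ^ (p : ℝ) := by
  have hp' : (0 : ℝ) < p := by positivity
  simp only [eLpNorm_nnreal_pow_eq_lintegral hp]
  rw [← lintegral_add_left' (hf.enorm.pow_const _)]
  refine lintegral_congr fun x => ?_
  by_cases hx : f x = 0
  · simp [hx, ENNReal.zero_rpow_of_pos hp']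
  · have hgx : g x = 0 := Function.notMem_support.1 (Set.disjoint_left.1 hfg hx)
    simp [hgx, ENNReal.zero_rpow_of_pos hp']

end LpTools

section Translation

variable {E G : Type*} [AddGroup E] [MeasurableSpace E] [MeasurableAdd E] [NormedAddCommGroup G]

lemma eLpNorm_comp_add_right {μ : Measure E} [μ.IsAddRightInvariant] {f : E → G}
    (hf : AEStronglyMeasurable f μ) (p : ℝ≥0∞) (a : E) :
    eLpNorm (fun x => f (x + a)) p μ = eLpNorm f p μ :=
  eLpNorm_comp_measurePreserving hf (measurePreserving_add_right μ a)

end Translation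

section Haar

variable {E G : Type*} [NormedAddCommGroup E] [NormedSpace ℝ E] [FiniteDimensional ℝ E]
  [MeasurableSpace E] [BorelSpace E] {μ : Measure E} [μ.IsAddHaarMeasure]
  [NormedAddCommGroup G]

lemma eLpNorm_comp_smul_le {f : E → G} (hf : AEStronglyMeasurable f μ) (p : ℝ≥0∞) {c : ℝ}
    (hc : 1 ≤ c) : eLpNorm (fun x => f (c • x)) p μ ≤ eLpNorm f p μ := by
  have hc₀ : c ≠ 0 := (zero_lt_one.trans_le hc).ne'
  have hmap : μ.map (c • ·) ≤ μ := by
    rw [Measure.map_addHaar_smul μ hc₀]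
    refine Measure.le_intro fun s _ _ => ?_
    rw [Measure.smul_apply, smul_eq_mul]
    refine mul_le_of_le_one_left' (ENNReal.ofReal_le_one.2 ?_)
    rw [abs_of_nonneg (by positivity)]
    exact inv_le_one_of_one_le₀ (one_le_pow₀ hc)
  calc eLpNorm (f ∘ (c • ·)) p μ = eLpNorm f p (μ.map (c • ·)) :=
        (eLpNorm_map_measure (hf.mono_measure hmap) (by fun_prop)).symm
    _ ≤ eLpNorm f p μ := eLpNorm_mono_measure f hmap

lemma tendsto_eLpNorm_comp_smul_sub_of_hasCompactSupport {p : ℝ≥0∞} (hp : p ≠ ∞) {g : E → G}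
    (hg : Continuous g) (hgc : HasCompactSupport g) :
    Tendsto (fun c : ℝ => eLpNorm (fun x => g (c • x) - g x) p μ) (𝓝[≥] 1) (𝓝 0) := by
  obtain ⟨R, hR₀, hR⟩ := hgc.isCompact.isBounded.subset_closedBall_lt 0 0
  have hzero : ∀ x : E, R < ‖x‖ → g x = 0 := fun x hx =>
    image_eq_zero_of_notMem_tsupport fun h => (mem_closedBall_zero_iff.1 (hR h)).not_gt hx
  have hscale : ∀ c : ℝ, 1 ≤ c → ∀ x : E, ‖x‖ ≤ ‖c • x‖ := fun c hc x => by
    rw [norm_smul, norm_of_nonneg (by positivity)]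
    exact le_mul_of_one_le_left (norm_nonneg x) hc
  rw [ENNReal.tendsto_nhds_zero]
  intro ε hε
  obtain ⟨κ, hκ, hκε⟩ := ENNReal.exists_nnreal_pos_mul_lt
    (a := μ (Metric.closedBall 0 R) ^ (1 / p.toReal))
    (ENNReal.rpow_ne_top_of_nonneg (by positivity) measure_closedBall_lt_top.ne) hε.ne'
  obtain ⟨r, hr, huc⟩ := Metric.uniformContinuous_iff.1
    (hgc.uniformContinuous_of_continuous hg) κ (by exact_mod_cast hκ)
  filter_upwards [self_mem_nhdsWithin, mem_nhdsWithin_of_mem_nhds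
    (Metric.ball_mem_nhds 1 (div_pos hr hR₀))] with c hc hcr
  rw [Set.mem_Ici] at hc
  rw [Metric.mem_ball, dist_eq, abs_of_nonneg (by linarith), lt_div_iff₀ hR₀] at hcr
  refine (eLpNorm_sub_le_of_dist_bdd μ hp (f := fun x => g (c • x)) (g := g)
    Metric.isClosed_closedBall.measurableSet κ.coe_nonneg (fun x => ?_) (fun x hx => ?_)
    ((subset_tsupport g).trans hR)).trans (by simpa using hκε.le)
  · rcases le_or_gt ‖x‖ R with hx | hx
    · refine (huc ?_).le
      calc dist (c • x) x = (c - 1) * ‖x‖ := by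
            rw [dist_eq_norm, ← norm_of_nonneg (sub_nonneg.2 hc), ← norm_smul, sub_smul, one_smul]
        _ ≤ (c - 1) * R := mul_le_mul_of_nonneg_left hx (sub_nonneg.2 hc)
        _ < r := hcr
    · simp [hzero x hx, hzero _ (hx.trans_le (hscale c hc x))]
  · exact mem_closedBall_zero_iff.2
      ((hscale c hc x).trans (not_lt.1 fun h => hx (hzero _ h)))

lemma tendsto_eLpNorm_comp_smul_sub {p : ℝ≥0∞} [Fact (1 ≤ p)] (hp : p ≠ ∞) {f : E → G}
    [NormedSpace ℝ G] (hf : MemLp f p μ) :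
    Tendsto (fun c : ℝ => eLpNorm (fun x => f (c • x) - f x) p μ) (𝓝[≥] 1) (𝓝 0) := by
  rw [ENNReal.tendsto_nhds_zero]
  intro ε hε
  have hε3 : ε / 3 ≠ 0 := by simpa using hε.ne'
  obtain ⟨g, hgc, hfg, hg, hgm⟩ := hf.exists_hasCompactSupport_eLpNorm_sub_le hp hε3
  have hlim := tendsto_eLpNorm_comp_smul_sub_of_hasCompactSupport (μ := μ) hp hg hgc
  filter_upwards [self_mem_nhdsWithin, hlim.eventually_le_const (pos_iff_ne_zero.2 hε3)]
    with c hc hgε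
  have hd : AEStronglyMeasurable (f - g) μ := (hf.sub hgm).1
  have hdc : AEStronglyMeasurable (fun x => (f - g) (c • x)) μ :=
    hd.comp_quasiMeasurePreserving
      (Measure.quasiMeasurePreserving_smul μ (zero_lt_one.trans_le hc).ne')
  have hsplit : (fun x => f (c • x) - f x) =
      (fun x => (f - g) (c • x)) + (fun x => g (c • x) - g x) + -(f - g) := by
    ext x
    simp only [Pi.add_apply, Pi.sub_apply, Pi.neg_apply]
    abel
  have hgm' : AEStronglyMeasurable (fun x => g (c • x) - g x) μ :=
    Continuous.aestronglyMeasurable (by fun_prop)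
  have h1 : (1 : ℝ≥0∞) ≤ p := Fact.out
  calc eLpNorm (fun x => f (c • x) - f x) p μ
      ≤ eLpNorm (fun x => (f - g) (c • x)) p μ + eLpNorm (fun x => g (c • x) - g x) p μ
          + eLpNorm (-(f - g)) p μ := by
        rw [hsplit]
        grw [eLpNorm_add_le (hdc.add hgm') hd.neg h1, eLpNorm_add_le hdc hgm' h1]
    _ ≤ ε / 3 + ε / 3 + ε / 3 := by
        rw [eLpNorm_neg]
        grw [eLpNorm_comp_smul_le hd p hc, hfg, hgε]
    _ = ε := ENNReal.add_thirds ε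

lemma eLpNorm_add_comp_add_right_sq {g : E → G} (hg : Continuous g) {R : ℝ}
    (hR : Function.support g ⊆ Metric.closedBall 0 R) {a : E} (ha : 2 * R < ‖a‖) :
    eLpNorm (fun x => g x + g (x + a)) 2 μ ^ 2 = 2 * eLpNorm g 2 μ ^ 2 := by
  have hdisj : Disjoint (Function.support g) (Function.support fun x => g (x + a)) := by
    refine Set.disjoint_left.2 fun x hx hxa => ha.not_ge ?_
    have h₁ := mem_closedBall_zero_iff.1 (hR hx)
    have h₂ := mem_closedBall_zero_iff.1 (hR (Function.mem_support.2 hxa))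
    linarith [add_sub_cancel_left x a ▸ norm_sub_le (x + a) x]
  have h := eLpNorm_add_rpow_of_disjoint_support (μ := μ) two_ne_zero
    hg.aestronglyMeasurable hdisj
  simp only [NNReal.coe_ofNat, ENNReal.rpow_ofNat, ENNReal.coe_ofNat] at h
  rw [eLpNorm_comp_add_right hg.aestronglyMeasurable, ← two_mul] at h
  exact h

lemma exists_eLpNorm_add_comp_add_right_le_of_hasCompactSupport [Nontrivial E]
    {g : E → G} (hg : Continuous g) (hgc : HasCompactSupport g) :
    ∃ a : E, eLpNorm (fun x => g x + g (x + a)) 2 μ ≤ (17 / 12 : ℝ≥0) * eLpNorm g 2 μ := by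
  obtain ⟨R, hR⟩ := hgc.isCompact.isBounded.subset_closedBall 0
  obtain ⟨a, ha⟩ := NormedSpace.exists_lt_norm ℝ E (2 * R)
  refine ⟨a, ?_⟩
  rw [← ENNReal.pow_le_pow_left_iff two_ne_zero, mul_pow,
    eLpNorm_add_comp_add_right_sq hg ((subset_tsupport g).trans hR) ha]
  gcongr
  -- `√2 ≤ 17 / 12`, with room to spare below the `3 / 2` of the next lemma
  norm_cast
  rw [← NNReal.coe_le_coe]
  norm_num

lemma exists_eLpNorm_add_comp_add_right_le [NormedSpace ℝ G] [Nontrivial E] {f : E → G}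
    (hf : MemLp f 2 μ) :
    ∃ a : E, eLpNorm (fun x => f x + f (x + a)) 2 μ ≤ (3 / 2 : ℝ≥0) * eLpNorm f 2 μ := by
  obtain ⟨N, hN⟩ : ∃ N : ℝ≥0, (N : ℝ≥0∞) = eLpNorm f 2 μ := ⟨_, ENNReal.coe_toNNReal hf.2.ne⟩
  obtain ⟨g, hgc, hfg, hg, hgm⟩ : ∃ g : E → G, HasCompactSupport g ∧
      eLpNorm (f - g) 2 μ ≤ (N / 50 : ℝ≥0) ∧ Continuous g ∧ MemLp g 2 μ := by
    by_cases hN₀ : N = 0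
    · exact ⟨0, HasCompactSupport.zero, by simp [← hN, hN₀], continuous_zero, .zero⟩
    · exact hf.exists_hasCompactSupport_eLpNorm_sub_le (by simp) (by simpa using hN₀)
  obtain ⟨a, hga⟩ := exists_eLpNorm_add_comp_add_right_le_of_hasCompactSupport (μ := μ) hg hgc
  have hd : AEStronglyMeasurable (f - g) μ := (hf.sub hgm).1
  have hda : AEStronglyMeasurable (fun x => (f - g) (x + a)) μ :=
    hd.comp_measurePreserving (measurePreserving_add_right μ a)
  have hgN : eLpNorm g 2 μ ≤ (N + N / 50 : ℝ≥0) := by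
    calc eLpNorm g 2 μ = eLpNorm (f - (f - g)) 2 μ := by rw [sub_sub_cancel]
      _ ≤ (N + N / 50 : ℝ≥0) := by
        grw [eLpNorm_sub_le hf.1 hd one_le_two, hfg, ← hN, ENNReal.coe_add]
  refine ⟨a, ?_⟩
  have hsplit : (fun x => f x + f (x + a)) =
      (f - g) + (fun x => (f - g) (x + a)) + fun x => g x + g (x + a) := by
    ext x
    simp only [Pi.add_apply, Pi.sub_apply]
    abel
  calc eLpNorm (fun x => f x + f (x + a)) 2 μ
      ≤ eLpNorm (f - g) 2 μ + eLpNorm (fun x => (f - g) (x + a)) 2 μ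
          + eLpNorm (fun x => g x + g (x + a)) 2 μ := by
        rw [hsplit]
        grw [eLpNorm_add_le (hd.add hda) (Continuous.aestronglyMeasurable (by fun_prop))
          one_le_two, eLpNorm_add_le hd hda one_le_two]
    _ ≤ (N / 50 : ℝ≥0) + (N / 50 : ℝ≥0) + (17 / 12 : ℝ≥0) * (N + N / 50 : ℝ≥0) := by
        rw [eLpNorm_comp_add_right hd]
        grw [hga, hfg, hgN]
    _ ≤ (3 / 2 : ℝ≥0) * eLpNorm f 2 μ := by
        rw [← hN]
        norm_cast
        rw [← NNReal.coe_le_coe]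
        push_cast
        linarith [N.coe_nonneg]

end Haar

section ParametricIntegrals

variable {H G : Type*} [NormedAddCommGroup H] [NormedSpace ℝ H] [NormedAddCommGroup G]
  [NormedSpace ℝ G]

lemma hasFDerivAt_slice {F : H × ℝ → G} (hF : Differentiable ℝ F) (x : H) (t : ℝ) :
    HasFDerivAt (fun x => F (x, t)) (fderiv ℝ F (x, t) ∘L .inl ℝ H ℝ) x :=
  (hF (x, t)).hasFDerivAt.comp x (hasFDerivAt_prodMk_left x t)

lemma hasDerivAt_slice {F : H × ℝ → G} (hF : Differentiable ℝ F) (x : H) (t : ℝ) :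
    HasDerivAt (fun s => F (x, s)) (fderiv ℝ F (x, t) (0, 1)) t :=
  (hF (x, t)).hasFDerivAt.comp_hasDerivAt t ((hasDerivAt_const t x).prodMk (hasDerivAt_id t))

lemma hasFDerivAt_intervalIntegral_of_contDiff [LocallyCompactSpace H] {F : H × ℝ → G}
    (hF : ContDiff ℝ 1 F) (a b : ℝ) (z : H) :
    HasFDerivAt (fun z => ∫ s in a..b, F (z, s))
      (∫ s in a..b, fderiv ℝ F (z, s) ∘L .inl ℝ H ℝ) z := by
  have hFc := hF.continuous
  have hF' : Continuous fun p => fderiv ℝ F p ∘L .inl ℝ H ℝ :=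
    (hF.continuous_fderiv one_ne_zero).clm_comp continuous_const
  obtain ⟨K, hK, hzK⟩ := exists_compact_mem_nhds z
  obtain ⟨C, hC⟩ := (hK.prod (isCompact_uIcc (a := a) (b := b))).exists_bound_of_continuousOn
    hF'.continuousOn
  have := secondCountableTopologyEither_of_left ℝ (H →L[ℝ] G)
  exact intervalIntegral.hasFDerivAt_integral_of_dominated_of_fderiv_le (bound := fun _ => C) hzK
    (.of_forall fun y => Continuous.aestronglyMeasurable (by fun_prop))
    (Continuous.intervalIntegrable (by fun_prop) _ _)
    (Continuous.aestronglyMeasurable (by fun_prop))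
    (.of_forall fun s hs y hy => hC (y, s) ⟨hy, Set.uIoc_subset_uIcc hs⟩) (by simp)
    (.of_forall fun s _ y _ => hasFDerivAt_slice (hF.differentiable one_ne_zero) y s)

lemma contDiff_one_intervalIntegral [LocallyCompactSpace H] {F : H × ℝ → G}
    (hF : ContDiff ℝ 1 F) (a b : ℝ) : ContDiff ℝ 1 fun z => ∫ s in a..b, F (z, s) := by
  have hF' : Continuous fun p => fderiv ℝ F p ∘L .inl ℝ H ℝ :=
    (hF.continuous_fderiv one_ne_zero).clm_comp continuous_const
  refine contDiff_one_iff_hasFDerivAt.2 ⟨_, ?_, hasFDerivAt_intervalIntegral_of_contDiff hF a b⟩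
  exact intervalIntegral.continuous_parametric_intervalIntegral_of_continuous' hF' _ _

lemma fderiv_time_eq_zero {F : H × ℝ → G} (hF : Differentiable ℝ F) {x : H} {t : ℝ}
    (hFx : ∀ᶠ s in 𝓝 t, F (x, s) = 0) : fderiv ℝ F (x, t) (0, 1) = 0 :=
  (hasDerivAt_slice hF x t).unique ((hasDerivAt_const t 0).congr_of_eventuallyEq hFx)

lemma hasDerivAt_integral_of_compactSupport [MeasurableSpace H] [BorelSpace H]
    [SecondCountableTopologyEither H G]
    {μ : Measure H} [IsFiniteMeasureOnCompacts μ] {F : H × ℝ → G} (hF : ContDiff ℝ 1 F) {t : ℝ}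
    {K : Set H} (hK : IsCompact K) (hFK : ∀ᶠ s in 𝓝 t, ∀ x ∉ K, F (x, s) = 0) :
    HasDerivAt (fun s => ∫ x, F (x, s) ∂μ) (∫ x, fderiv ℝ F (x, t) (0, 1) ∂μ) t := by
  have hFc := hF.continuous
  have hF' : Continuous fun p => fderiv ℝ F p (0, 1) :=
    (hF.continuous_fderiv one_ne_zero).clm_apply continuous_const
  have hF'K : ∀ x ∉ K, fderiv ℝ F (x, t) (0, 1) = 0 := fun x hx =>
    fderiv_time_eq_zero (hF.differentiable one_ne_zero) (hFK.mono fun s hs => hs x hx)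
  obtain ⟨C, hC⟩ := (hK.prod (isCompact_closedBall t 1)).exists_bound_of_continuousOn
    hF'.continuousOn
  have hKfin : IsFiniteMeasure (μ.restrict K) := ⟨by simpa using hK.measure_lt_top⟩
  have h := (hasDerivAt_integral_of_dominated_loc_of_deriv_le (μ := μ.restrict K)
    (F := fun s x => F (x, s)) (F' := fun s x => fderiv ℝ F (x, s) (0, 1)) (bound := fun _ => C)
    (Metric.closedBall_mem_nhds t one_pos)
    (.of_forall fun s => Continuous.aestronglyMeasurable (by fun_prop))
    (Continuous.continuousOn (by fun_prop) |>.integrableOn_compact hK)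
    (Continuous.aestronglyMeasurable (by fun_prop))
    ((ae_restrict_mem hK.measurableSet).mono fun x hx s hs => hC (x, s) ⟨hx, hs⟩)
    (integrable_const C)
    (.of_forall fun x s _ => hasDerivAt_slice (hF.differentiable one_ne_zero) x s)).2
  rw [setIntegral_eq_integral_of_forall_compl_eq_zero hF'K] at h
  exact h.congr_of_eventuallyEq (hFK.mono fun s hs =>
    (setIntegral_eq_integral_of_forall_compl_eq_zero hs).symm)

end ParametricIntegrals

section Divergence

variable {E : Type*} [NormedAddCommGroup E] [InnerProductSpace ℝ E]

/-- The divergence of a vector field, as the trace of its derivative. -/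
noncomputable def divergence (X : E → E) (x : E) : ℝ :=
  LinearMap.trace ℝ E (fderiv ℝ X x)

variable {X Y : E → E} {φ : E → ℝ} {x : E}

lemma divergence_sub (hX : DifferentiableAt ℝ X x) (hY : DifferentiableAt ℝ Y x) :
    divergence (fun y => X y - Y y) x = divergence X x - divergence Y x := by
  simp [divergence, fderiv_fun_sub hX hY]

lemma divergence_const_smul (c : ℝ) (hX : DifferentiableAt ℝ X x) :
    divergence (fun y => c • X y) x = c * divergence X x := by
  simp [divergence, fderiv_fun_const_smul hX]

lemma divergence_eq_sum_fderiv_inner {ι : Type*} [Fintype ι] (b : OrthonormalBasis ι ℝ E)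
    (hX : DifferentiableAt ℝ X x) :
    divergence X x = ∑ i, fderiv ℝ (fun y => inner ℝ (b i) (X y)) x (b i) := by
  rw [divergence, LinearMap.trace_eq_sum_inner _ b]
  refine Finset.sum_congr rfl fun i _ => ?_
  rw [fderiv_inner_apply ℝ (differentiableAt_const _) hX]
  simp

lemma hasCompactSupport_divergence (hX : HasCompactSupport X) :
    HasCompactSupport (divergence X) :=
  (hX.fderiv ℝ).comp_left (g := fun T : E →L[ℝ] E => LinearMap.trace ℝ E T) (by simp)

variable [FiniteDimensional ℝ E]

lemma divergence_id (x : E) : divergence (fun y : E => y) x = Module.finrank ℝ E := by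
  simp [divergence]

lemma divergence_smul (hφ : DifferentiableAt ℝ φ x) (hX : DifferentiableAt ℝ X x) :
    divergence (fun y => φ y • X y) x = fderiv ℝ φ x (X x) + φ x * divergence X x := by
  rw [divergence, fderiv_fun_smul hφ hX]
  simp [divergence, add_comm, LinearMap.trace_smulRight]

lemma continuous_divergence (hX : ContDiff ℝ 1 X) : Continuous (divergence X) := by
  have h : Continuous (fun T : E →L[ℝ] E => LinearMap.trace ℝ E T) :=
    LinearMap.continuous_of_finiteDimensional
      ((LinearMap.trace ℝ E) ∘ₗ (ContinuousLinearMap.coeLM ℝ))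
  exact h.comp (hX.continuous_fderiv one_ne_zero)

variable [MeasurableSpace E] [BorelSpace E] {μ : Measure E} [μ.IsAddHaarMeasure]

lemma integral_fderiv_apply_eq_zero {f : E → ℝ} (hf : ContDiff ℝ 1 f)
    (hfc : HasCompactSupport f) (v : E) : ∫ x, fderiv ℝ f x v ∂μ = 0 := by
  have hint : Integrable (fun x => fderiv ℝ f x v) μ :=
    ((hf.continuous_fderiv one_ne_zero).clm_apply
      continuous_const).integrable_of_hasCompactSupport (hfc.fderiv_apply ℝ _)
  have h := integral_mul_fderiv_eq_neg_fderiv_mul_of_integrable (μ := μ) (f := f)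
    (g := fun _ => (1 : ℝ)) (v := v) (by simpa using hint) (by simp)
    (by simpa using hf.continuous.integrable_of_hasCompactSupport hfc)
    (fun x _ => hf.differentiable one_ne_zero x) (fun x _ => by fun_prop)
  simpa using h.symm

lemma integral_divergence_eq_zero (hX : ContDiff ℝ 1 X) (hXc : HasCompactSupport X) :
    ∫ x, divergence X x ∂μ = 0 := by
  set b := stdOrthonormalBasis ℝ E
  have hXb : ∀ i, ContDiff ℝ 1 fun y => inner ℝ (b i) (X y) := fun i =>
    contDiff_const.inner ℝ hX
  have hXbc : ∀ i, HasCompactSupport fun y => inner ℝ (b i) (X y) := fun i =>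
    hXc.comp_left (g := fun w => inner ℝ (b i) w) (inner_zero_right _)
  simp_rw [fun x => divergence_eq_sum_fderiv_inner b (hX.differentiable one_ne_zero x)]
  have hint : ∀ i, Integrable (fun x => fderiv ℝ (fun y => inner ℝ (b i) (X y)) x (b i)) μ :=
    fun i => (((hXb i).continuous_fderiv one_ne_zero).clm_apply
      continuous_const).integrable_of_hasCompactSupport ((hXbc i).fderiv_apply ℝ _)
  rw [integral_finsetSum _ fun i _ => hint i]
  exact Finset.sum_eq_zero fun i _ => integral_fderiv_apply_eq_zero (hXb i) (hXbc i) _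

end Divergence

section Covectors

variable {E : Type*} [NormedAddCommGroup E] [InnerProductSpace ℝ E] [FiniteDimensional ℝ E]

/-- The vector of `E` representing the spatial part of a space-time covector; it sends `dU(x, t)`
to the spatial gradient of `U`. -/
noncomputable def spatialVector : (E × ℝ →L[ℝ] ℝ) →L[ℝ] E :=
  LinearMap.toContinuousLinearMap
    { toFun := fun ℓ => (InnerProductSpace.toDual ℝ E).symm (ℓ ∘L .inl ℝ E ℝ)
      map_add' := by simp
      map_smul' := by simp }

/-- The Euclidean space-time vector representing a covector: its squared norm at `dU` is the energy
density `|∇U|² + U_t²`. -/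
noncomputable def energyVector : (E × ℝ →L[ℝ] ℝ) →L[ℝ] WithLp 2 (E × ℝ) :=
  (WithLp.prodContinuousLinearEquiv 2 ℝ E ℝ).symm ∘L
    (spatialVector.prod (ContinuousLinearMap.apply ℝ ℝ (0, 1)))

/-- The wave operator `∂ₜ² - Δ`, acting on the space-time Hessian. -/
noncomputable def dAlembertian : (E × ℝ →L[ℝ] E × ℝ →L[ℝ] ℝ) →L[ℝ] ℝ :=
  LinearMap.toContinuousLinearMap
    { toFun := fun B : E × ℝ →L[ℝ] E × ℝ →L[ℝ] ℝ =>
        B (0, 1) (0, 1) - LinearMap.trace ℝ E (spatialVector ∘L B ∘L .inl ℝ E ℝ)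
      map_add' := fun B B' => by
        simp only [_root_.add_apply, ContinuousLinearMap.add_comp, ContinuousLinearMap.comp_add,
          ContinuousLinearMap.toLinearMap_add, map_add]
        ring
      map_smul' := fun c B => by
        simp only [_root_.smul_apply, ContinuousLinearMap.smul_comp, ContinuousLinearMap.comp_smul,
          ContinuousLinearMap.toLinearMap_smul, map_smul, smul_sub, RingHom.id_apply] }

lemma dAlembertian_apply (B : E × ℝ →L[ℝ] E × ℝ →L[ℝ] ℝ) :
    dAlembertian B =
      B (0, 1) (0, 1) - LinearMap.trace ℝ E (spatialVector ∘L B ∘L .inl ℝ E ℝ) := rfl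

lemma inner_spatialVector (ℓ : E × ℝ →L[ℝ] ℝ) (v : E) : inner ℝ (spatialVector ℓ) v = ℓ (v, 0) := by
  simp [spatialVector]

lemma inner_energyVector (ℓ m : E × ℝ →L[ℝ] ℝ) :
    inner ℝ (energyVector ℓ) (energyVector m) =
      inner ℝ (spatialVector ℓ) (spatialVector m) + ℓ (0, 1) * m (0, 1) := by
  simp [energyVector, WithLp.prod_inner_apply, mul_comm]

lemma norm_energyVector_sq (ℓ : E × ℝ →L[ℝ] ℝ) :
    ‖energyVector ℓ‖ ^ 2 = ‖spatialVector ℓ‖ ^ 2 + ℓ (0, 1) ^ 2 := by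
  rw [← real_inner_self_eq_norm_sq, inner_energyVector, real_inner_self_eq_norm_sq, sq (ℓ _)]

lemma norm_spatialVector_le (ℓ : E × ℝ →L[ℝ] ℝ) : ‖spatialVector ℓ‖ ≤ ‖energyVector ℓ‖ :=
  le_of_sq_le_sq (by rw [norm_energyVector_sq]; linarith [sq_nonneg (ℓ (0, 1))]) (norm_nonneg _)

lemma abs_time_le (ℓ : E × ℝ →L[ℝ] ℝ) : |ℓ (0, 1)| ≤ ‖energyVector ℓ‖ :=
  abs_le_of_sq_le_sq (by rw [norm_energyVector_sq]; linarith [sq_nonneg ‖spatialVector ℓ‖])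
    (norm_nonneg _)

lemma abs_apply_space_le (ℓ : E × ℝ →L[ℝ] ℝ) (v : E) : |ℓ (v, 0)| ≤ ‖energyVector ℓ‖ * ‖v‖ := by
  rw [← inner_spatialVector]
  grw [abs_real_inner_le_norm, norm_spatialVector_le]

lemma sq_apply_space_le (ℓ : E × ℝ →L[ℝ] ℝ) (v : E) :
    ℓ (v, 0) ^ 2 ≤ ‖spatialVector ℓ‖ ^ 2 * ‖v‖ ^ 2 := by
  rw [← inner_spatialVector, ← mul_pow]
  exact sq_le_sq' (neg_le_of_abs_le (abs_real_inner_le_norm _ _)) (real_inner_le_norm _ _)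

lemma gradient_slice {U : E × ℝ → ℝ} (hU : Differentiable ℝ U) (x : E) (t : ℝ) :
    gradient (fun y => U (y, t)) x = spatialVector (fderiv ℝ U (x, t)) := by
  rw [gradient, (hasFDerivAt_slice hU x t).fderiv]
  rfl

lemma dAlembertian_bilinearComp_smul (c : ℝ) (B : E × ℝ →L[ℝ] E × ℝ →L[ℝ] ℝ) :
    dAlembertian (B.bilinearComp (c • .id ℝ _) (c • .id ℝ _)) = c ^ 2 * dAlembertian B := by
  have h : B.bilinearComp (c • .id ℝ _) (c • .id ℝ _) = c ^ 2 • B := by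
    refine ContinuousLinearMap.ext fun v => ContinuousLinearMap.ext fun w => ?_
    simp only [ContinuousLinearMap.bilinearComp_apply, _root_.smul_apply,
      ContinuousLinearMap.id_apply, map_smul, smul_eq_mul]
    ring
  rw [h, map_smul, smul_eq_mul]

/-- The time reversal `(x, t) ↦ (x, -t)`, which turns estimates forward in time into estimates
backward in time. -/
noncomputable def timeReversal : E × ℝ →L[ℝ] E × ℝ :=
  (ContinuousLinearMap.id ℝ E).prodMap (-.id ℝ ℝ)

lemma dAlembertian_bilinearComp_timeReversal (B : E × ℝ →L[ℝ] E × ℝ →L[ℝ] ℝ) :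
    dAlembertian (B.bilinearComp timeReversal timeReversal) = dAlembertian B := by
  have h : spatialVector ∘L B.bilinearComp timeReversal timeReversal ∘L .inl ℝ E ℝ =
      spatialVector ∘L B ∘L .inl ℝ E ℝ := by
    ext v
    refine ext_inner_right ℝ fun w => ?_
    simp [inner_spatialVector, timeReversal]
  have h' : B (0, -1) (0, -1) = B (0, 1) (0, 1) := by
    rw [show ((0 : E), (-1 : ℝ)) = -(0, 1) by simp]
    simp only [map_neg, _root_.neg_apply, neg_neg]
  rw [dAlembertian_apply, dAlembertian_apply, h]
  simp [timeReversal, h']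

end Covectors

section Hessian

variable {H G : Type*} [NormedAddCommGroup H] [NormedSpace ℝ H] [NormedAddCommGroup G]
  [NormedSpace ℝ G] {f g : H → G}

lemma differentiable_fderiv (hf : ContDiff ℝ 2 f) : Differentiable ℝ (fderiv ℝ f) :=
  (hf.fderiv_right (m := 1) (by norm_num)).differentiable one_ne_zero

lemma fderiv_fderiv_add (hf : ContDiff ℝ 2 f) (hg : ContDiff ℝ 2 g) (z : H) :
    fderiv ℝ (fderiv ℝ fun z => f z + g z) z =
      fderiv ℝ (fderiv ℝ f) z + fderiv ℝ (fderiv ℝ g) z := by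
  have h : fderiv ℝ (fun z => f z + g z) = fun z => fderiv ℝ f z + fderiv ℝ g z := funext fun y =>
    fderiv_fun_add (hf.differentiable two_ne_zero y) (hg.differentiable two_ne_zero y)
  rw [h]
  exact fderiv_fun_add (differentiable_fderiv hf z) (differentiable_fderiv hg z)

lemma fderiv_fderiv_const_smul (hf : ContDiff ℝ 2 f) (c : ℝ) (z : H) :
    fderiv ℝ (fderiv ℝ fun z => c • f z) z = c • fderiv ℝ (fderiv ℝ f) z := by
  rw [funext fun y => fderiv_fun_const_smul (hf.differentiable two_ne_zero y) c]
  exact fderiv_fun_const_smul (differentiable_fderiv hf z) c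

lemma fderiv_comp_affine (hf : Differentiable ℝ f) (A : H →L[ℝ] H) (a z : H) :
    fderiv ℝ (fun z => f (A z + a)) z = fderiv ℝ f (A z + a) ∘L A :=
  ((hf _).hasFDerivAt.comp z (A.hasFDerivAt.add_const a)).fderiv

lemma fderiv_fderiv_comp_affine (hf : ContDiff ℝ 2 f) (A : H →L[ℝ] H) (a z : H) :
    fderiv ℝ (fderiv ℝ fun z => f (A z + a)) z =
      (fderiv ℝ (fderiv ℝ f) (A z + a)).bilinearComp A A := by
  rw [funext (fderiv_comp_affine (hf.differentiable two_ne_zero) A a)]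
  have h : HasFDerivAt (fun z => fderiv ℝ f (A z + a)) (fderiv ℝ (fderiv ℝ f) (A z + a) ∘L A) z :=
    (differentiable_fderiv hf (A z + a)).hasFDerivAt.comp z (A.hasFDerivAt.add_const a)
  rw [(h.clm_comp (hasFDerivAt_const A z)).fderiv]
  ext
  simp

lemma fderiv_fderiv_slice {F : H × ℝ → G} (hF : ContDiff ℝ 2 F) (z : H) (s : ℝ) :
    fderiv ℝ (fderiv ℝ fun z => F (z, s)) z =
      fderiv ℝ (fun p => fderiv ℝ F p ∘L .inl ℝ H ℝ) (z, s) ∘L .inl ℝ H ℝ := by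
  have hF₁ : ContDiff ℝ 1 fun p => fderiv ℝ F p ∘L .inl ℝ H ℝ :=
    (hF.fderiv_right (m := 1) (by norm_num)).clm_comp contDiff_const
  rw [funext fun z => (hasFDerivAt_slice (hF.differentiable two_ne_zero) z s).fderiv]
  exact (hasFDerivAt_slice (hF₁.differentiable one_ne_zero) z s).fderiv

variable [LocallyCompactSpace H]

lemma fderiv_intervalIntegral {F : H × ℝ → G} (hF : ContDiff ℝ 1 F) (a b : ℝ) (z : H) :
    fderiv ℝ (fun z => ∫ s in a..b, F (z, s)) z =
      ∫ s in a..b, fderiv ℝ (fun z => F (z, s)) z := by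
  simp_rw [fun s => (hasFDerivAt_slice (hF.differentiable one_ne_zero) z s).fderiv]
  exact (hasFDerivAt_intervalIntegral_of_contDiff hF a b z).fderiv

lemma map_fderiv_fderiv_intervalIntegral [CompleteSpace G] (L : (H →L[ℝ] H →L[ℝ] G) →L[ℝ] ℝ)
    {F : H × ℝ → G} (hF : ContDiff ℝ 2 F) (a b : ℝ) (z : H) :
    L (fderiv ℝ (fderiv ℝ fun z => ∫ s in a..b, F (z, s)) z) =
      ∫ s in a..b, L (fderiv ℝ (fderiv ℝ fun z => F (z, s)) z) := by
  have hF₁ : ContDiff ℝ 1 fun p => fderiv ℝ F p ∘L .inl ℝ H ℝ :=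
    (hF.fderiv_right (m := 1) (by norm_num)).clm_comp contDiff_const
  have hF₂ : Continuous fun s =>
      fderiv ℝ (fun p => fderiv ℝ F p ∘L .inl ℝ H ℝ) (z, s) ∘L .inl ℝ H ℝ := by
    have := hF₁.continuous_fderiv one_ne_zero
    fun_prop
  rw [funext fun z => (hasFDerivAt_intervalIntegral_of_contDiff (hF.of_le one_le_two) a b z).fderiv,
    (hasFDerivAt_intervalIntegral_of_contDiff hF₁ a b z).fderiv]
  simp_rw [fderiv_fderiv_slice hF]
  exact (ContinuousLinearMap.intervalIntegral_comp_comm (𝕜 := ℝ) (E := H →L[ℝ] H →L[ℝ] G) L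
    (hF₂.intervalIntegrable (μ := volume) a b)).symm

lemma contDiff_two_intervalIntegral {F : H × ℝ → G} (hF : ContDiff ℝ 2 F) (a b : ℝ) :
    ContDiff ℝ 2 fun z => ∫ s in a..b, F (z, s) := by
  have hF₁ : ContDiff ℝ 1 fun p => fderiv ℝ F p ∘L .inl ℝ H ℝ :=
    (hF.fderiv_right (m := 1) (by norm_num)).clm_comp contDiff_const
  have hderiv := hasFDerivAt_intervalIntegral_of_contDiff (hF.of_le one_le_two) a b
  refine contDiff_succ_iff_fderiv (n := 1).2 ⟨fun z => (hderiv z).differentiableAt, by simp, ?_⟩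
  rw [funext fun z => (hderiv z).fderiv]
  exact contDiff_one_intervalIntegral hF₁ a b

end Hessian

section FreeWaves

variable {E : Type*} [NormedAddCommGroup E] [InnerProductSpace ℝ E] [FiniteDimensional ℝ E]

/-- A classical solution of the free wave equation, as a function on space-time `E × ℝ`. -/
structure IsFreeWave (U : E × ℝ → ℝ) : Prop where
  contDiff : ContDiff ℝ 2 U
  dAlembertian_eq_zero : ∀ z, dAlembertian (fderiv ℝ (fderiv ℝ U) z) = 0

namespace IsFreeWave

variable {U W : E × ℝ → ℝ}

lemma add (hU : IsFreeWave U) (hW : IsFreeWave W) : IsFreeWave fun z => U z + W z :=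
  ⟨hU.contDiff.add hW.contDiff, fun z => by
    rw [fderiv_fderiv_add hU.contDiff hW.contDiff, map_add, hU.dAlembertian_eq_zero,
      hW.dAlembertian_eq_zero, add_zero]⟩

lemma const_smul (hU : IsFreeWave U) (c : ℝ) : IsFreeWave fun z => c • U z :=
  ⟨hU.contDiff.const_smul c, fun z => by
    rw [fderiv_fderiv_const_smul hU.contDiff, map_smul, hU.dAlembertian_eq_zero, smul_zero]⟩

lemma sub (hU : IsFreeWave U) (hW : IsFreeWave W) : IsFreeWave fun z => U z - W z := by
  simpa [sub_eq_add_neg] using hU.add (hW.const_smul (-1))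

lemma comp_affine (hU : IsFreeWave U) {A : E × ℝ →L[ℝ] E × ℝ} {κ : ℝ}
    (hA : ∀ B, dAlembertian (B.bilinearComp A A) = κ * dAlembertian B) (a : E × ℝ) :
    IsFreeWave fun z => U (A z + a) :=
  ⟨hU.contDiff.comp (A.contDiff.add contDiff_const), fun z => by
    rw [fderiv_fderiv_comp_affine hU.contDiff, hA, hU.dAlembertian_eq_zero, mul_zero]⟩

lemma comp_smul (hU : IsFreeWave U) (c : ℝ) : IsFreeWave fun z => U (c • z) := by
  simpa using hU.comp_affine (dAlembertian_bilinearComp_smul c) 0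

lemma comp_add_right (hU : IsFreeWave U) (a : E × ℝ) : IsFreeWave fun z => U (z + a) := by
  simpa using hU.comp_affine (dAlembertian_bilinearComp_smul 1) a

lemma comp_timeReversal (hU : IsFreeWave U) : IsFreeWave fun z => U (timeReversal z) := by
  simpa using hU.comp_affine (κ := 1) (by simpa using dAlembertian_bilinearComp_timeReversal) 0

lemma intervalIntegral {F : (E × ℝ) × ℝ → ℝ} (hF : ContDiff ℝ 2 F)
    (hwave : ∀ s, IsFreeWave fun z => F (z, s)) (a b : ℝ) :
    IsFreeWave fun z => ∫ s in a..b, F (z, s) := by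
  refine ⟨contDiff_two_intervalIntegral hF a b, fun z => ?_⟩
  rw [map_fderiv_fderiv_intervalIntegral dAlembertian hF]
  simp [(hwave _).dAlembertian_eq_zero]

end IsFreeWave

end FreeWaves

section EnergyNorm

lemma continuous_energyVector_fderiv {E : Type*} [NormedAddCommGroup E] [InnerProductSpace ℝ E]
    [FiniteDimensional ℝ E] {U : E × ℝ → ℝ} (hU : ContDiff ℝ 1 U) :
    Continuous fun z => energyVector (fderiv ℝ U z) :=
  energyVector.continuous.comp (hU.continuous_fderiv one_ne_zero)

variable {E : Type*} [NormedAddCommGroup E] [InnerProductSpace ℝ E] [FiniteDimensional ℝ E]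
  [MeasurableSpace E] {μ : Measure E} {U W : E × ℝ → ℝ}

/-- The square root of the energy `∫ (|∇U|² + U_t²) dμ` at time `t`. Restricting `μ` to a ball gives
the energy inside that ball. -/
noncomputable def energyNorm (μ : Measure E) (U : E × ℝ → ℝ) (t : ℝ) : ℝ≥0∞ :=
  eLpNorm (fun x => energyVector (fderiv ℝ U (x, t))) 2 μ

lemma energyNorm_sq (μ : Measure E) (U : E × ℝ → ℝ) (t : ℝ) :
    energyNorm μ U t ^ 2 = ∫⁻ x, ENNReal.ofReal (‖energyVector (fderiv ℝ U (x, t))‖ ^ 2) ∂μ := by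
  simpa [energyNorm, ENNReal.ofReal_pow, ofReal_norm] using
    eLpNorm_nnreal_pow_eq_lintegral (μ := μ) (f := fun x => energyVector (fderiv ℝ U (x, t)))
      (two_ne_zero (α := ℝ≥0))

lemma energyNorm_const_smul (hU : Differentiable ℝ U) (c : ℝ) (t : ℝ) :
    energyNorm μ (fun z => c • U z) t = ‖c‖ₑ * energyNorm μ U t := by
  unfold energyNorm
  simp_rw [fun x => fderiv_fun_const_smul (hU (x, t)) c, map_smul]
  exact eLpNorm_const_smul c (fun x => energyVector (fderiv ℝ U (x, t))) 2 μ

lemma energyNorm_comp_timeReversal (hU : Differentiable ℝ U) (t : ℝ) :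
    energyNorm μ (fun z => U (timeReversal z)) t = energyNorm μ U (-t) := by
  refine eLpNorm_congr_norm_ae (.of_forall fun x => ?_)
  have h := fderiv_comp_affine hU timeReversal 0 (x, t)
  simp only [add_zero] at h
  have hspace : spatialVector (fderiv ℝ U (timeReversal (x, t)) ∘L timeReversal) =
      spatialVector (fderiv ℝ U (timeReversal (x, t))) :=
    ext_inner_right ℝ fun v => by simp [inner_spatialVector, timeReversal]
  have htime : (fderiv ℝ U (timeReversal (x, t)) ∘L timeReversal) (0, 1) ^ 2 =
      fderiv ℝ U (timeReversal (x, t)) (0, 1) ^ 2 := by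
    have : timeReversal (0, 1) = -((0 : E), (1 : ℝ)) := by simp [timeReversal]
    rw [ContinuousLinearMap.comp_apply, this, map_neg, neg_sq]
  rw [h, ← sq_eq_sq₀ (norm_nonneg _) (norm_nonneg _), norm_energyVector_sq, norm_energyVector_sq,
    hspace, htime]
  simp [timeReversal]

variable [BorelSpace E]

lemma aestronglyMeasurable_energyVector_fderiv (hU : ContDiff ℝ 1 U) (t : ℝ) :
    AEStronglyMeasurable (fun x => energyVector (fderiv ℝ U (x, t))) μ :=
  ((continuous_energyVector_fderiv hU).comp (by fun_prop)).aestronglyMeasurable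

lemma energyNorm_add_le (hU : ContDiff ℝ 1 U) (hW : ContDiff ℝ 1 W) (t : ℝ) :
    energyNorm μ (fun z => U z + W z) t ≤ energyNorm μ U t + energyNorm μ W t := by
  unfold energyNorm
  simp_rw [fun x => fderiv_fun_add (hU.differentiable one_ne_zero (x, t))
    (hW.differentiable one_ne_zero (x, t)), map_add]
  exact eLpNorm_add_le (aestronglyMeasurable_energyVector_fderiv hU t)
    (aestronglyMeasurable_energyVector_fderiv hW t) one_le_two

lemma energyNorm_sub_le (hU : ContDiff ℝ 1 U) (hW : ContDiff ℝ 1 W) (t : ℝ) :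
    energyNorm μ (fun z => U z - W z) t ≤ energyNorm μ U t + energyNorm μ W t := by
  have h := energyNorm_add_le (μ := μ) hU (hW.const_smul (-1 : ℝ)) t
  rw [energyNorm_const_smul (hW.differentiable one_ne_zero)] at h
  simpa [sub_eq_add_neg] using h

variable [μ.IsAddHaarMeasure]

lemma energyNorm_comp_add_right (hU : ContDiff ℝ 1 U) (a : E) (t : ℝ) :
    energyNorm μ (fun z => U (z + (a, 0))) t = energyNorm μ U t := by
  unfold energyNorm
  simp_rw [fderiv_comp_add_right, Prod.mk_add_mk, add_zero]
  exact eLpNorm_comp_add_right (aestronglyMeasurable_energyVector_fderiv hU t) 2 a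

lemma energyNorm_comp_smul_le (hU : ContDiff ℝ 1 U) {c : ℝ} (hc : 1 ≤ c) (t : ℝ) :
    energyNorm μ (fun z => U (c • z)) t ≤ ‖c‖ₑ * energyNorm μ U (c * t) := by
  unfold energyNorm
  simp_rw [fderiv_comp_smul, map_smul, Prod.smul_mk, smul_eq_mul]
  refine (eLpNorm_const_smul c (fun x => energyVector (fderiv ℝ U (c • x, c * t))) 2 μ).trans_le ?_
  gcongr
  exact eLpNorm_comp_smul_le (aestronglyMeasurable_energyVector_fderiv hU (c * t)) 2 hc

end EnergyNorm

section EnergyIdentity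

lemma fderiv_fderiv_comm {H : Type*} [NormedAddCommGroup H] [NormedSpace ℝ H] {f : H → ℝ}
    (hf : ContDiff ℝ 2 f) (z v w : H) :
    fderiv ℝ (fderiv ℝ f) z v w = fderiv ℝ (fderiv ℝ f) z w v :=
  (hf.contDiffAt.isSymmSndFDerivAt (by simp)) v w

lemma hasFDerivAt_map_fderiv {H V : Type*} [NormedAddCommGroup H] [NormedSpace ℝ H]
    [NormedAddCommGroup V] [NormedSpace ℝ V] (L : (H →L[ℝ] ℝ) →L[ℝ] V) {f : H → ℝ}
    (hf : ContDiff ℝ 2 f) (z : H) :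
    HasFDerivAt (fun z => L (fderiv ℝ f z)) (L ∘L fderiv ℝ (fderiv ℝ f) z) z :=
  L.hasFDerivAt.comp z (differentiable_fderiv hf z).hasFDerivAt

lemma contDiff_map_fderiv {H V : Type*} [NormedAddCommGroup H] [NormedSpace ℝ H]
    [NormedAddCommGroup V] [NormedSpace ℝ V] (L : (H →L[ℝ] ℝ) →L[ℝ] V) {f : H → ℝ}
    (hf : ContDiff ℝ 2 f) : ContDiff ℝ 1 fun z => L (fderiv ℝ f z) :=
  L.contDiff.comp (hf.fderiv_right (by norm_num))

variable {E : Type*} [NormedAddCommGroup E] [InnerProductSpace ℝ E] [FiniteDimensional ℝ E]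
  {U φ : E × ℝ → ℝ}

lemma contDiff_norm_energyVector_sq (hU : ContDiff ℝ 2 U) :
    ContDiff ℝ 1 fun z => ‖energyVector (fderiv ℝ U z)‖ ^ 2 :=
  (contDiff_map_fderiv energyVector hU).norm_sq ℝ

lemma IsFreeWave.divergence_spatialVector_fderiv (hU : IsFreeWave U) (x : E) (t : ℝ) :
    divergence (fun y => spatialVector (fderiv ℝ U (y, t))) x =
      fderiv ℝ (fderiv ℝ U) (x, t) (0, 1) (0, 1) := by
  have hslice := hasFDerivAt_slice
    ((contDiff_map_fderiv spatialVector hU.contDiff).differentiable one_ne_zero) x t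
  rw [(hasFDerivAt_map_fderiv spatialVector hU.contDiff _).fderiv] at hslice
  rw [divergence, hslice.fderiv]
  have h := hU.dAlembertian_eq_zero (x, t)
  rw [dAlembertian_apply] at h
  exact (sub_eq_zero.1 h).symm

/-- The vector field `U_t ∇U` at time `t`; up to the factor `-2`, the flux of energy. -/
noncomputable def energyFlux (U : E × ℝ → ℝ) (t : ℝ) (x : E) : E :=
  fderiv ℝ U (x, t) (0, 1) • spatialVector (fderiv ℝ U (x, t))

lemma contDiff_energyFlux (hU : ContDiff ℝ 2 U) (t : ℝ) : ContDiff ℝ 1 (energyFlux U t) :=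
  have h : ContDiff ℝ 1 fun z => fderiv ℝ U z (0, 1) • spatialVector (fderiv ℝ U z) :=
    (contDiff_map_fderiv (ContinuousLinearMap.apply ℝ ℝ (0, 1)) hU).smul
      (contDiff_map_fderiv spatialVector hU)
  h.comp (contDiff_prodMk_left t)

lemma IsFreeWave.fderiv_norm_energyVector_sq (hU : IsFreeWave U) (x : E) (t : ℝ) :
    fderiv ℝ (fun z => ‖energyVector (fderiv ℝ U z)‖ ^ 2) (x, t) (0, 1) =
      2 * divergence (energyFlux U t) x := by
  have henergy := ((hasFDerivAt_map_fderiv energyVector hU.contDiff (x, t)).norm_sq).fderiv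
  have htime := hasFDerivAt_slice ((contDiff_map_fderiv (ContinuousLinearMap.apply ℝ ℝ (0, 1))
    hU.contDiff).differentiable one_ne_zero) x t
  rw [(hasFDerivAt_map_fderiv _ hU.contDiff _).fderiv] at htime
  have hspace := hasFDerivAt_slice ((contDiff_map_fderiv spatialVector hU.contDiff).differentiable
    one_ne_zero) x t
  have hmixed : inner ℝ (energyVector (fderiv ℝ U (x, t)))
      (energyVector (fderiv ℝ (fderiv ℝ U) (x, t) (0, 1))) =
        fderiv ℝ (fderiv ℝ U) (x, t) (spatialVector (fderiv ℝ U (x, t)), 0) (0, 1) +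
          fderiv ℝ U (x, t) (0, 1) * fderiv ℝ (fderiv ℝ U) (x, t) (0, 1) (0, 1) := by
    rw [inner_energyVector, real_inner_comm, inner_spatialVector, fderiv_fderiv_comm hU.contDiff]
  have hdiv := divergence_smul htime.differentiableAt hspace.differentiableAt
  rw [htime.fderiv, hU.divergence_spatialVector_fderiv] at hdiv
  refine (congrArg (· (0, 1)) henergy).trans (Eq.trans ?_ (congrArg (2 * ·) hdiv.symm))
  simpa [-WithLp.prod_inner_apply] using hmixed

/-- The weight `φ` decreases in time at least as fast as it varies in space. Since energy travels at
speed at most one, the energy weighted by such a `φ` does not increase. -/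
def IsCausallyDecreasing (φ : E × ℝ → ℝ) : Prop :=
  ∀ z, ‖spatialVector (fderiv ℝ φ z)‖ ≤ -fderiv ℝ φ z (0, 1)

lemma IsFreeWave.fderiv_weighted_energy (hU : IsFreeWave U) (hφ : ContDiff ℝ 1 φ) (x : E)
    (t : ℝ) :
    fderiv ℝ (fun z => φ z * ‖energyVector (fderiv ℝ U z)‖ ^ 2) (x, t) (0, 1) =
      2 * divergence (fun y => φ (y, t) • energyFlux U t y) x +
        (fderiv ℝ φ (x, t) (0, 1) * ‖energyVector (fderiv ℝ U (x, t))‖ ^ 2 -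
          2 * (fderiv ℝ U (x, t) (0, 1) *
            fderiv ℝ φ (x, t) (spatialVector (fderiv ℝ U (x, t)), 0))) := by
  have henergy : Differentiable ℝ fun z => ‖energyVector (fderiv ℝ U z)‖ ^ 2 :=
    (contDiff_norm_energyVector_sq hU.contDiff).differentiable one_ne_zero
  have hφs := hasFDerivAt_slice (hφ.differentiable one_ne_zero) x t
  have hdiv := divergence_smul hφs.differentiableAt
    ((contDiff_energyFlux hU.contDiff t).differentiable one_ne_zero x)
  have hφflux : fderiv ℝ (fun y => φ (y, t)) x (energyFlux U t x) = fderiv ℝ U (x, t) (0, 1) *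
      fderiv ℝ φ (x, t) (spatialVector (fderiv ℝ U (x, t)), 0) := by
    rw [hφs.fderiv, energyFlux, map_smul]
    rfl
  refine (congrArg (· (0, 1)) (fderiv_fun_mul (hφ.differentiable one_ne_zero (x, t))
    (henergy (x, t)))).trans ?_
  simp only [_root_.add_apply, _root_.smul_apply, smul_eq_mul, hU.fderiv_norm_energyVector_sq,
    hdiv, hφflux]
  ring

lemma IsFreeWave.fderiv_weighted_energy_le (hU : IsFreeWave U) (hφ : ContDiff ℝ 1 φ)
    (hcausal : IsCausallyDecreasing φ) (x : E) (t : ℝ) :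
    fderiv ℝ (fun z => φ z * ‖energyVector (fderiv ℝ U z)‖ ^ 2) (x, t) (0, 1) ≤
      2 * divergence (fun y => φ (y, t) • energyFlux U t y) x := by
  rw [hU.fderiv_weighted_energy hφ]
  set ℓ := fderiv ℝ U (x, t)
  set p := -fderiv ℝ φ (x, t) (0, 1)
  have hp : 0 ≤ p := (norm_nonneg _).trans (hcausal (x, t))
  have hcross : -(ℓ (0, 1) * fderiv ℝ φ (x, t) (spatialVector ℓ, 0)) ≤
      |ℓ (0, 1)| * (p * ‖spatialVector ℓ‖) := by
    grw [← inner_spatialVector, neg_le_abs, abs_mul, abs_real_inner_le_norm, hcausal (x, t)]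
  have hsq : p * ‖energyVector ℓ‖ ^ 2 - 2 * (|ℓ (0, 1)| * (p * ‖spatialVector ℓ‖)) =
      p * (‖spatialVector ℓ‖ - |ℓ (0, 1)|) ^ 2 := by
    rw [norm_energyVector_sq, ← sq_abs (ℓ _)]
    ring
  have : 0 ≤ p * (‖spatialVector ℓ‖ - |ℓ (0, 1)|) ^ 2 := by positivity
  linarith

variable [MeasurableSpace E] [BorelSpace E] {μ : Measure E} [μ.IsAddHaarMeasure]

lemma IsFreeWave.antitone_weighted_energy (hU : IsFreeWave U) (hφ : ContDiff ℝ 1 φ)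
    (hcausal : IsCausallyDecreasing φ)
    (hsupp : ∀ t, ∃ K, IsCompact K ∧ ∀ᶠ s in 𝓝 t, ∀ x ∉ K, φ (x, s) = 0) :
    Antitone fun t => ∫ x, φ (x, t) * ‖energyVector (fderiv ℝ U (x, t))‖ ^ 2 ∂μ := by
  have hF : ContDiff ℝ 1 fun z => φ z * ‖energyVector (fderiv ℝ U z)‖ ^ 2 :=
    hφ.mul (contDiff_norm_energyVector_sq hU.contDiff)
  choose K hK hφK using hsupp
  have hFK : ∀ t, ∀ᶠ s in 𝓝 t, ∀ x ∉ K t, φ (x, s) * ‖energyVector (fderiv ℝ U (x, s))‖ ^ 2 = 0 :=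
    fun t => (hφK t).mono fun s hs x hx => by simp [hs x hx]
  have hderiv := fun t => hasDerivAt_integral_of_compactSupport (μ := μ) hF (hK t) (hFK t)
  refine antitone_of_deriv_nonpos (fun t => (hderiv t).differentiableAt) fun t => ?_
  rw [(hderiv t).deriv]
  have hfluxc : HasCompactSupport fun y => φ (y, t) • energyFlux U t y :=
    .intro (hK t) fun x hx => by simp [(hφK t).self_of_nhds x hx]
  have hflux : ContDiff ℝ 1 fun y => φ (y, t) • energyFlux U t y :=
    (hφ.comp (contDiff_prodMk_left t)).smul (contDiff_energyFlux hU.contDiff t)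
  calc ∫ x, fderiv ℝ (fun z => φ z * ‖energyVector (fderiv ℝ U z)‖ ^ 2) (x, t) (0, 1) ∂μ
      ≤ ∫ x, 2 * divergence (fun y => φ (y, t) • energyFlux U t y) x ∂μ := by
        refine integral_mono ?_ ?_ fun x => hU.fderiv_weighted_energy_le hφ hcausal x t
        · exact ((hF.continuous_fderiv one_ne_zero).clm_apply continuous_const
            |>.comp (Continuous.prodMk_left t)).integrable_of_hasCompactSupport (.intro (hK t)
              fun x hx => fderiv_time_eq_zero (hF.differentiable one_ne_zero)
                ((hFK t).mono fun s hs => hs x hx))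
        · exact ((continuous_divergence hflux).integrable_of_hasCompactSupport
            (hasCompactSupport_divergence hfluxc)).const_mul 2
    _ = 0 := by rw [integral_const_mul, integral_divergence_eq_zero hflux hfluxc, mul_zero]

end EnergyIdentity

section Conservation

variable {E : Type*} [NormedAddCommGroup E] {R : ℝ} {z : E × ℝ}

/-- A smooth cutoff to the backward light cone with vertex at the origin at time `R`, in which
`√(1 + |x|²)` replaces `|x|` to be smooth at the origin. -/
noncomputable def coneCutoff (R : ℝ) (z : E × ℝ) : ℝ :=
  smoothTransition (R - z.2 - √(1 + ‖z.1‖ ^ 2))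

lemma coneCutoff_eq_zero (hz : R - z.2 ≤ ‖z.1‖) : coneCutoff R z = 0 := by
  have h : ‖z.1‖ ≤ √(1 + ‖z.1‖ ^ 2) := Real.le_sqrt_of_sq_le (by linarith)
  exact smoothTransition.zero_of_nonpos (by linarith)

lemma coneCutoff_eq_one (hz : ‖z.1‖ + 2 ≤ R - z.2) : coneCutoff R z = 1 := by
  have h : √(1 + ‖z.1‖ ^ 2) ≤ 1 + ‖z.1‖ :=
    Real.sqrt_le_iff.2 ⟨by positivity, by nlinarith [norm_nonneg z.1]⟩
  exact smoothTransition.one_of_one_le (by linarith)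

variable [InnerProductSpace ℝ E]

lemma contDiff_coneCutoff (R : ℝ) : ContDiff ℝ 1 (coneCutoff (E := E) R) := by
  refine smoothTransition.contDiff.comp ((contDiff_const.sub contDiff_snd).sub ?_)
  exact (contDiff_const.add (contDiff_fst.norm_sq ℝ)).sqrt fun z => by positivity

variable [FiniteDimensional ℝ E]

lemma exists_isCompact_coneCutoff_eq_zero (R t : ℝ) :
    ∃ K : Set E, IsCompact K ∧ ∀ᶠ s in 𝓝 t, ∀ x ∉ K, coneCutoff R (x, s) = 0 := by
  refine ⟨_, isCompact_closedBall 0 (R - t + 1), ?_⟩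
  filter_upwards [eventually_gt_nhds (sub_one_lt t)] with s hs x hx
  refine coneCutoff_eq_zero ?_
  simp only [Metric.mem_closedBall, dist_zero_right, not_le] at hx ⊢
  linarith

lemma isCausallyDecreasing_coneCutoff (R : ℝ) : IsCausallyDecreasing (coneCutoff (E := E) R) := by
  rintro ⟨x, t⟩
  set ρ := √(1 + ‖x‖ ^ 2)
  set σ' := deriv smoothTransition (R - t - ρ)
  have hσ' : 0 ≤ σ' := smoothTransition.monotone.deriv_nonneg
  have hρ : 0 < ρ := by positivity
  have hxρ : ‖x‖ ≤ ρ := Real.le_sqrt_of_sq_le (by linarith)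
  have hsqrt : HasFDerivAt (fun z : E × ℝ => √(1 + ‖z.1‖ ^ 2)) _ (x, t) :=
    ((hasFDerivAt_fst.norm_sq).const_add 1).sqrt (by positivity)
  have hderiv : HasFDerivAt (coneCutoff (E := E) R) _ (x, t) :=
    (smoothTransition.contDiff.differentiable one_ne_zero _).hasDerivAt.comp_hasFDerivAt (x, t)
      ((hasFDerivAt_snd.const_sub R).sub hsqrt)
  have hspace : spatialVector (fderiv ℝ (coneCutoff R) (x, t)) = -(σ' * ρ⁻¹) • x := by
    refine ext_inner_right ℝ fun v => ?_
    rw [inner_spatialVector, hderiv.fderiv]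
    simp only [one_div, mul_inv_rev, _root_.smul_apply, _root_.sub_apply, _root_.neg_apply,
      ContinuousLinearMap.coe_snd', neg_zero, ContinuousLinearMap.comp_apply,
      ContinuousLinearMap.coe_fst', coe_innerSL_apply, nsmul_eq_mul, Nat.cast_ofNat, smul_eq_mul,
      real_inner_smul_left, σ', ρ]
    ring
  have htime : fderiv ℝ (coneCutoff R) (x, t) (0, 1) = -σ' := by
    rw [hderiv.fderiv]
    simp [σ', ρ]
  rw [hspace, htime, neg_neg, neg_smul, norm_neg, norm_smul, Real.norm_of_nonneg (by positivity),
    mul_assoc, inv_mul_eq_div]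
  exact mul_le_of_le_one_right hσ' (div_le_one_of_le₀ hxρ hρ.le)

variable [MeasurableSpace E] [BorelSpace E] {μ : Measure E} [μ.IsAddHaarMeasure] {U : E × ℝ → ℝ}

lemma setLIntegral_ball_energy_le (hU : IsFreeWave U) {s t : ℝ} (hst : s ≤ t) (r : ℝ) :
    ∫⁻ x in Metric.ball 0 r, ENNReal.ofReal (‖energyVector (fderiv ℝ U (x, t))‖ ^ 2) ∂μ ≤
      ∫⁻ x, ENNReal.ofReal (‖energyVector (fderiv ℝ U (x, s))‖ ^ 2) ∂μ := by
  set R := r + 2 + t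
  set f : ℝ → E → ℝ := fun τ x => coneCutoff R (x, τ) * ‖energyVector (fderiv ℝ U (x, τ))‖ ^ 2
  have hf0 : ∀ τ x, 0 ≤ f τ x := fun τ x => mul_nonneg (smoothTransition.nonneg _) (sq_nonneg _)
  have hf : ∀ τ, ∫⁻ x, ENNReal.ofReal (f τ x) ∂μ = ENNReal.ofReal (∫ x, f τ x ∂μ) := fun τ => by
    obtain ⟨K, hK, hKR⟩ := exists_isCompact_coneCutoff_eq_zero (E := E) R τ
    have hcont : Continuous fun z : E × ℝ => coneCutoff R z * ‖energyVector (fderiv ℝ U z)‖ ^ 2 :=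
      ((contDiff_coneCutoff R).mul (contDiff_norm_energyVector_sq hU.contDiff)).continuous
    refine (ofReal_integral_eq_lintegral_ofReal ?_ (.of_forall (hf0 τ))).symm
    exact (hcont.comp (Continuous.prodMk_left τ)).integrable_of_hasCompactSupport
      (.intro hK fun x hx => by simp [hKR.self_of_nhds x hx])
  calc ∫⁻ x in Metric.ball 0 r, ENNReal.ofReal (‖energyVector (fderiv ℝ U (x, t))‖ ^ 2) ∂μ
      = ∫⁻ x in Metric.ball 0 r, ENNReal.ofReal (f t x) ∂μ := by
        refine setLIntegral_congr_fun measurableSet_ball fun x hx => ?_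
        have hxr : ‖x‖ < r := by simpa using hx
        simp only [f]
        rw [coneCutoff_eq_one (by simp only [R]; linarith), one_mul]
    _ ≤ ∫⁻ x, ENNReal.ofReal (f t x) ∂μ := setLIntegral_le_lintegral _ _
    _ ≤ ∫⁻ x, ENNReal.ofReal (f s x) ∂μ := by
        rw [hf, hf]
        exact ENNReal.ofReal_le_ofReal (hU.antitone_weighted_energy (contDiff_coneCutoff R)
          (isCausallyDecreasing_coneCutoff R) (exists_isCompact_coneCutoff_eq_zero R) hst)
    _ ≤ _ := lintegral_mono fun x => ENNReal.ofReal_le_ofReal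
        (mul_le_of_le_one_left (sq_nonneg _) (smoothTransition.le_one _))

namespace IsFreeWave

lemma antitone_energyNorm (hU : IsFreeWave U) : Antitone (energyNorm μ U) := by
  intro s t hst
  rw [← ENNReal.pow_le_pow_left_iff two_ne_zero, energyNorm_sq, energyNorm_sq]
  have hmeas : AEMeasurable (fun x => ENNReal.ofReal (‖energyVector (fderiv ℝ U (x, t))‖ ^ 2)) μ :=
    ((contDiff_norm_energyVector_sq hU.contDiff).continuous.comp
      (Continuous.prodMk_left t)).measurable.ennreal_ofReal.aemeasurable
  exact le_of_tendsto' ((aecover_ball tendsto_id).lintegral_tendsto_of_countably_generated hmeas)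
    (setLIntegral_ball_energy_le hU hst)

theorem energyNorm_eq (hU : IsFreeWave U) (s t : ℝ) : energyNorm μ U s = energyNorm μ U t := by
  have hmono : Monotone (energyNorm μ U) := fun s t hst => by
    have h := hU.comp_timeReversal.antitone_energyNorm (μ := μ) (neg_le_neg hst)
    have hd := hU.contDiff.differentiable two_ne_zero
    rwa [energyNorm_comp_timeReversal hd, energyNorm_comp_timeReversal hd, neg_neg, neg_neg] at h
  exact (le_total s t).elim (fun h => le_antisymm (hmono h) (hU.antitone_energyNorm h))
    fun h => le_antisymm (hU.antitone_energyNorm h) (hmono h)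

end IsFreeWave

end Conservation

section SmoothTransition

lemma deriv_smoothTransition_eq_zero {q : ℝ} (hq : q ∉ Set.Icc 0 1) :
    deriv smoothTransition q = 0 := by
  rcases lt_or_ge q 0 with h0 | h0
  · refine (EventuallyEq.deriv_eq (f := fun _ => (0 : ℝ)) ?_).trans (deriv_const _ _)
    filter_upwards [gt_mem_nhds h0] with p hp using smoothTransition.zero_of_nonpos (le_of_lt hp)
  · have h1 : 1 < q := not_le.1 fun h => hq ⟨h0, h⟩
    refine (EventuallyEq.deriv_eq (f := fun _ => (1 : ℝ)) ?_).trans (deriv_const _ _)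
    filter_upwards [lt_mem_nhds h1] with p hp using smoothTransition.one_of_one_le (le_of_lt hp)

lemma exists_abs_deriv_smoothTransition_mul_le :
    ∃ C, ∀ q, |deriv smoothTransition q * q| ≤ C :=
  HasCompactSupport.exists_bound_of_continuous
    (.intro (K := Set.Icc 0 1) isCompact_Icc fun q hq => by
      simp [deriv_smoothTransition_eq_zero hq])
    ((smoothTransition.contDiff.continuous_deriv one_le_two).mul continuous_id)

end SmoothTransition

section Scaling

variable {H : Type*} [NormedAddCommGroup H] [NormedSpace ℝ H] {f : H → ℝ}

/-- The derivative of `f` along the scaling field `z ↦ z`; on space-time, `x · ∇f + t ∂ₜf`. -/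
noncomputable def scalingDeriv (f : H → ℝ) (z : H) : ℝ := fderiv ℝ f z z

lemma contDiff_scalingDeriv (hf : ContDiff ℝ 2 f) : ContDiff ℝ 1 (scalingDeriv f) :=
  (hf.fderiv_right (by norm_num)).clm_apply contDiff_id

lemma fderiv_scalingDeriv_apply (hf : ContDiff ℝ 2 f) (z w : H) :
    fderiv ℝ (scalingDeriv f) z w = fderiv ℝ (fderiv ℝ f) z w z + fderiv ℝ f z w := by
  have h := (differentiable_fderiv hf z).hasFDerivAt.clm_apply (hasFDerivAt_id z)
  rw [show scalingDeriv f = fun z => fderiv ℝ f z (id z) from rfl, h.fderiv]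
  simp [add_comm]

lemma scalingDeriv_prod (f : H × ℝ → ℝ) (x : H) (t : ℝ) :
    scalingDeriv f (x, t) = fderiv ℝ f (x, t) (x, 0) + t * fderiv ℝ f (x, t) (0, 1) := by
  rw [scalingDeriv, ← smul_eq_mul, ← map_smul, ← map_add]
  simp

end Scaling

section InteriorCutoff

variable {E : Type*} [NormedAddCommGroup E] {η t : ℝ} {x : E}

/-- For `0 < η < t`, a smooth cutoff to the ball of radius `t`, equal to `1` on the ball of radius
`t - η`. -/
noncomputable def interiorCutoff (η t : ℝ) (x : E) : ℝ :=
  smoothTransition ((t ^ 2 - ‖x‖ ^ 2) / (t * η))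

lemma abs_interiorCutoff_le_one (η t : ℝ) (x : E) : |interiorCutoff η t x| ≤ 1 :=
  (abs_of_nonneg (smoothTransition.nonneg _)).trans_le (smoothTransition.le_one _)

lemma interiorCutoff_eq_one (hη : 0 < η) (hx : ‖x‖ < t - η) : interiorCutoff η t x = 1 := by
  have ht : 0 < t := by linarith [norm_nonneg x]
  refine smoothTransition.one_of_one_le ?_
  rw [one_le_div (by positivity)]
  nlinarith [norm_nonneg x]

lemma interiorCutoff_eq_zero (hη : 0 < η) (ht : 0 < t) (hx : t ≤ ‖x‖) :
    interiorCutoff η t x = 0 :=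
  smoothTransition.zero_of_nonpos
    (div_nonpos_of_nonpos_of_nonneg (by nlinarith) (by positivity))

lemma contDiff_interiorCutoff [InnerProductSpace ℝ E] (η t : ℝ) :
    ContDiff ℝ 1 (interiorCutoff (E := E) η t) :=
  smoothTransition.contDiff.comp ((contDiff_const.sub (contDiff_id.norm_sq ℝ)).div_const _)

end InteriorCutoff

section InteriorField

variable {E : Type*} [NormedAddCommGroup E] [InnerProductSpace ℝ E] [FiniteDimensional ℝ E]
  {V : E × ℝ → ℝ}

/-- The field `t² ∇V - (x · ∇V) x` at time `t`. It pairs with `∇V` to a quantity controlling the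
energy well inside the light cone, while its divergence only involves first derivatives of `V` and
of `scalingDeriv V`. -/
noncomputable def interiorField (V : E × ℝ → ℝ) (t : ℝ) (x : E) : E :=
  t ^ 2 • spatialVector (fderiv ℝ V (x, t)) - inner ℝ (spatialVector (fderiv ℝ V (x, t))) x • x

lemma inner_self_interiorField (V : E × ℝ → ℝ) (t : ℝ) (x : E) :
    inner ℝ x (interiorField V t x) = (t ^ 2 - ‖x‖ ^ 2) * fderiv ℝ V (x, t) (x, 0) := by
  rw [interiorField, inner_sub_right, real_inner_smul_right, real_inner_smul_right,
    real_inner_self_eq_norm_sq, real_inner_comm, inner_spatialVector]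
  ring

lemma fderiv_apply_interiorField (V : E × ℝ → ℝ) (t : ℝ) (x : E) :
    fderiv ℝ V (x, t) (interiorField V t x, 0) =
      t ^ 2 * ‖spatialVector (fderiv ℝ V (x, t))‖ ^ 2 - fderiv ℝ V (x, t) (x, 0) ^ 2 := by
  rw [← inner_spatialVector, ← inner_spatialVector, interiorField, inner_sub_right,
    real_inner_smul_right, real_inner_smul_right, real_inner_self_eq_norm_sq, sq (inner ℝ _ _)]

lemma contDiff_interiorField (hV : ContDiff ℝ 2 V) (t : ℝ) : ContDiff ℝ 1 (interiorField V t) :=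
  have hgrad : ContDiff ℝ 1 fun z => spatialVector (fderiv ℝ V z) :=
    contDiff_map_fderiv spatialVector hV
  have hspace : ContDiff ℝ 1 fun x => spatialVector (fderiv ℝ V (x, t)) :=
    hgrad.comp (contDiff_prodMk_left t)
  (hspace.const_smul (t ^ 2)).sub ((hspace.inner ℝ contDiff_id).smul contDiff_id)

lemma fderiv_inner_spatialVector_self (hV : ContDiff ℝ 2 V) (x : E) (t : ℝ) :
    fderiv ℝ (fun y => inner ℝ (spatialVector (fderiv ℝ V (y, t))) y) x x =
      fderiv ℝ (fderiv ℝ V) (x, t) (x, 0) (x, 0) + fderiv ℝ V (x, t) (x, 0) := by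
  have hspace := hasFDerivAt_slice
    ((contDiff_map_fderiv spatialVector hV).differentiable one_ne_zero) x t
  rw [(hasFDerivAt_map_fderiv spatialVector hV _).fderiv] at hspace
  have h := fderiv_inner_apply ℝ hspace.differentiableAt differentiableAt_id x
  rw [hspace.fderiv] at h
  refine h.trans ?_
  simp [inner_spatialVector, add_comm]

lemma IsFreeWave.divergence_interiorField (hV : IsFreeWave V) (x : E) (t : ℝ) :
    divergence (interiorField V t) x =
      t * fderiv ℝ (scalingDeriv V) (x, t) (0, 1) - fderiv ℝ (scalingDeriv V) (x, t) (x, 0) -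
        scalingDeriv V (x, t) - (Module.finrank ℝ E - 1) * fderiv ℝ V (x, t) (x, 0) := by
  have hspace : DifferentiableAt ℝ (fun y => spatialVector (fderiv ℝ V (y, t))) x :=
    (hasFDerivAt_slice ((contDiff_map_fderiv spatialVector hV.contDiff).differentiable one_ne_zero)
      x t).differentiableAt
  have hradial := hspace.inner ℝ differentiableAt_fun_id
  have hxt : ((x, t) : E × ℝ) = (x, 0) + t • (0, 1) := by simp
  have hsecond : ∀ w, fderiv ℝ (fderiv ℝ V) (x, t) w (x, t) =
      fderiv ℝ (fderiv ℝ V) (x, t) w (x, 0) + t * fderiv ℝ (fderiv ℝ V) (x, t) w (0, 1) :=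
    fun w => by
      rw [← smul_eq_mul, ← map_smul, ← map_add, ← hxt]
  unfold interiorField
  rw [divergence_sub (hspace.fun_const_smul (t ^ 2)) (hradial.fun_smul differentiableAt_fun_id),
    divergence_const_smul _ hspace, hV.divergence_spatialVector_fderiv,
    divergence_smul hradial differentiableAt_fun_id, divergence_id,
    fderiv_inner_spatialVector_self hV.contDiff, inner_spatialVector,
    fderiv_scalingDeriv_apply hV.contDiff, fderiv_scalingDeriv_apply hV.contDiff, hsecond, hsecond,
    fderiv_fderiv_comm hV.contDiff (x, t) (0, 1) (x, 0), scalingDeriv_prod]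
  ring

lemma fderiv_interiorCutoff_interiorField (V : E × ℝ → ℝ) (η t : ℝ) (x : E) :
    fderiv ℝ (interiorCutoff η t) x (interiorField V t x) =
      -2 * (deriv smoothTransition ((t ^ 2 - ‖x‖ ^ 2) / (t * η)) *
        ((t ^ 2 - ‖x‖ ^ 2) / (t * η))) * fderiv ℝ V (x, t) (x, 0) := by
  have harg : HasFDerivAt (fun y : E => (t ^ 2 - ‖y‖ ^ 2) / (t * η)) _ x :=
    ((hasFDerivAt_id x).norm_sq.const_sub (t ^ 2)).mul_const (t * η)⁻¹
  have hcutoff : HasFDerivAt (interiorCutoff (E := E) η t) _ x :=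
    (smoothTransition.contDiff.differentiable one_ne_zero _).hasDerivAt.comp_hasFDerivAt x harg
  rw [hcutoff.fderiv]
  simp only [id_eq, ContinuousLinearMap.comp_id, _root_.smul_apply, _root_.neg_apply,
    coe_innerSL_apply, inner_self_interiorField, nsmul_eq_mul, Nat.cast_ofNat, smul_eq_mul]
  ring

/-- The virial field `χ V Y`, with `χ` the interior cutoff and `Y` the interior field. -/
noncomputable def virialField (V : E × ℝ → ℝ) (η t : ℝ) (x : E) : E :=
  (interiorCutoff η t x * V (x, t)) • interiorField V t x

lemma contDiff_virialField (hV : ContDiff ℝ 2 V) (η t : ℝ) : ContDiff ℝ 1 (virialField V η t) :=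
  ((contDiff_interiorCutoff η t).mul ((hV.of_le one_le_two).comp (contDiff_prodMk_left t))).smul
    (contDiff_interiorField hV t)

lemma hasCompactSupport_virialField {η t : ℝ} (hη : 0 < η) (ht : 0 < t) (V : E × ℝ → ℝ) :
    HasCompactSupport (virialField V η t) :=
  .intro (isCompact_closedBall 0 t) fun x hx => by
    rw [Metric.mem_closedBall, dist_zero_right, not_le] at hx
    rw [virialField, interiorCutoff_eq_zero hη ht hx.le, zero_mul, zero_smul]

lemma divergence_virialField (hV : ContDiff ℝ 2 V) (η t : ℝ) (x : E) :
    divergence (virialField V η t) x =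
      interiorCutoff η t x * fderiv ℝ V (x, t) (interiorField V t x, 0) +
      V (x, t) * (interiorCutoff η t x * divergence (interiorField V t) x -
        2 * (deriv smoothTransition ((t ^ 2 - ‖x‖ ^ 2) / (t * η)) *
          ((t ^ 2 - ‖x‖ ^ 2) / (t * η))) * fderiv ℝ V (x, t) (x, 0)) := by
  have hcutoff : DifferentiableAt ℝ (interiorCutoff η t) x :=
    (contDiff_interiorCutoff η t).differentiable one_ne_zero x
  have hslice := hasFDerivAt_slice (hV.differentiable two_ne_zero) x t
  have hfield := (contDiff_interiorField hV t).differentiable one_ne_zero x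
  unfold virialField
  rw [divergence_smul (hcutoff.fun_mul hslice.differentiableAt) hfield,
    fderiv_fun_mul hcutoff hslice.differentiableAt, hslice.fderiv]
  simp only [_root_.add_apply, _root_.smul_apply, smul_eq_mul, ContinuousLinearMap.comp_apply,
    ContinuousLinearMap.inl_apply, fderiv_interiorCutoff_interiorField]
  ring

end InteriorField

section InteriorEstimate

variable {E : Type*} [NormedAddCommGroup E] [InnerProductSpace ℝ E] [FiniteDimensional ℝ E]
  {V : E × ℝ → ℝ}

/-- The squares of `V`, of its scaling derivative and of the space-time gradients of both. -/
noncomputable def controlDensity (V : E × ℝ → ℝ) (z : E × ℝ) : ℝ :=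
  V z ^ 2 + ‖energyVector (fderiv ℝ V z)‖ ^ 2 + scalingDeriv V z ^ 2 +
    ‖energyVector (fderiv ℝ (scalingDeriv V) z)‖ ^ 2

lemma abs_mul_le_controlDensity (V : E × ℝ → ℝ) (z : E × ℝ) {c : ℝ} (hc : 0 ≤ c) :
    |V z| * (2 * ‖energyVector (fderiv ℝ (scalingDeriv V) z)‖ + |scalingDeriv V z| +
      c * ‖energyVector (fderiv ℝ V z)‖) ≤ (c + 3) / 2 * controlDensity V z := by
  rw [controlDensity]
  set e := ‖energyVector (fderiv ℝ V z)‖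
  set e' := ‖energyVector (fderiv ℝ (scalingDeriv V) z)‖
  have hVe := mul_le_mul_of_nonneg_left (two_mul_le_add_sq |V z| e) hc
  have hVe' := two_mul_le_add_sq |V z| e'
  have hVS := two_mul_le_add_sq |V z| |scalingDeriv V z|
  rw [sq_abs] at hVe hVe'
  rw [sq_abs, sq_abs] at hVS
  have : 0 ≤ c * scalingDeriv V z ^ 2 := by positivity
  have : 0 ≤ c * e' ^ 2 := by positivity
  linarith [sq_nonneg e, sq_nonneg e', sq_nonneg (scalingDeriv V z)]

lemma IsFreeWave.abs_divergence_interiorField_le (hV : IsFreeWave V) {x : E} {t : ℝ} (ht : 1 ≤ t)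
    (hx : ‖x‖ ≤ t) :
    |divergence (interiorField V t) x| ≤
      t * (2 * ‖energyVector (fderiv ℝ (scalingDeriv V) (x, t))‖ + |scalingDeriv V (x, t)| +
        (Module.finrank ℝ E + 1) * ‖energyVector (fderiv ℝ V (x, t))‖) := by
  have htime := abs_time_le (fderiv ℝ (scalingDeriv V) (x, t))
  have hspace := (abs_apply_space_le (fderiv ℝ (scalingDeriv V) (x, t)) x).trans
    (mul_le_mul_of_nonneg_left hx (norm_nonneg _))
  have hradial := (abs_apply_space_le (fderiv ℝ V (x, t)) x).trans
    (mul_le_mul_of_nonneg_left hx (norm_nonneg _))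
  have hdim : |(Module.finrank ℝ E - 1 : ℝ)| ≤ Module.finrank ℝ E + 1 := by
    simpa using abs_sub (Module.finrank ℝ E : ℝ) 1
  rw [hV.divergence_interiorField]
  grw [abs_sub, abs_sub, abs_sub, abs_mul, abs_mul, abs_of_nonneg (one_pos.le.trans ht), htime,
    hspace, hdim, hradial]
  nlinarith [le_mul_of_one_le_left (abs_nonneg (scalingDeriv V (x, t))) ht]

lemma IsFreeWave.virial_remainder_le (hV : IsFreeWave V) {C η t : ℝ}
    (hC : ∀ q, |deriv smoothTransition q * q| ≤ C) (hη : 0 < η) (ht : 1 ≤ t) (x : E) :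
    |divergence (virialField V η t) x -
        interiorCutoff η t x * fderiv ℝ V (x, t) (interiorField V t x, 0)| ≤
      t * (C + Module.finrank ℝ E / 2 + 2) * controlDensity V (x, t) := by
  rw [divergence_virialField hV.contDiff, add_sub_cancel_left]
  set q := (t ^ 2 - ‖x‖ ^ 2) / (t * η)
  set e := ‖energyVector (fderiv ℝ V (x, t))‖
  set e' := ‖energyVector (fderiv ℝ (scalingDeriv V) (x, t))‖
  have hC0 : 0 ≤ C := (abs_nonneg _).trans (hC 0)
  rcases le_or_gt ‖x‖ t with hx | hx
  · have hradial : |fderiv ℝ V (x, t) (x, 0)| ≤ e * t :=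
      (abs_apply_space_le _ x).trans (mul_le_mul_of_nonneg_left hx (norm_nonneg _))
    have hbound : |V (x, t) * (interiorCutoff η t x * divergence (interiorField V t) x -
        2 * (deriv smoothTransition q * q) * fderiv ℝ V (x, t) (x, 0))| ≤
      |V (x, t)| * (1 * (t * (2 * e' + |scalingDeriv V (x, t)| +
        (Module.finrank ℝ E + 1) * e)) + 2 * C * (e * t)) := by
      grw [abs_mul, abs_sub, abs_mul, abs_mul, abs_mul, hC, hradial,
        hV.abs_divergence_interiorField_le ht hx, abs_interiorCutoff_le_one, abs_two]
    have hcontrol := abs_mul_le_controlDensity V (x, t)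
      (by positivity : 0 ≤ Module.finrank ℝ E + 1 + 2 * C)
    refine hbound.trans ?_
    linarith [mul_le_mul_of_nonneg_left hcontrol (one_pos.le.trans ht)]
  · have hq : q < 0 := div_neg_of_neg_of_pos (by nlinarith) (by positivity)
    rw [interiorCutoff_eq_zero hη (one_pos.trans_le ht) hx.le,
      deriv_smoothTransition_eq_zero fun h => hq.not_ge h.1]
    simp only [zero_mul, mul_zero, sub_zero, abs_zero, controlDensity]
    positivity

lemma ball_energy_density_le {η t : ℝ} (hη : 1 ≤ η) {x : E} (hx : ‖x‖ < t - η) :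
    η * ‖energyVector (fderiv ℝ V (x, t))‖ ^ 2 ≤
      3 / t * fderiv ℝ V (x, t) (interiorField V t x, 0) + 2 * scalingDeriv V (x, t) ^ 2 := by
  have ht : 0 < t := by linarith [norm_nonneg x]
  have hcone : ‖x‖ ^ 2 + t * η ≤ t ^ 2 := by nlinarith [norm_nonneg x]
  have hxt : ‖x‖ ^ 2 ≤ t ^ 2 := by nlinarith
  have hηt : η ≤ t ^ 2 := by nlinarith [norm_nonneg x]
  have ha := sq_apply_space_le (fderiv ℝ V (x, t)) x
  rw [norm_energyVector_sq, fderiv_apply_interiorField, scalingDeriv_prod]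
  set g := ‖spatialVector (fderiv ℝ V (x, t))‖
  set a := fderiv ℝ V (x, t) (x, 0)
  set b := fderiv ℝ V (x, t) (0, 1)
  have hspace : t * (η * g ^ 2) ≤ t ^ 2 * g ^ 2 - a ^ 2 := by
    linarith [mul_le_mul_of_nonneg_left hcone (sq_nonneg g)]
  have hradial : η * a ^ 2 ≤ t * (t * (η * g ^ 2)) := by
    grw [ha, hxt]
    exact le_of_eq (by ring)
  have htime : t * (η * b ^ 2) ≤ t * (2 * (a + t * b) ^ 2) + 2 * (t ^ 2 * g ^ 2 - a ^ 2) := by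
    have hsq : (t * b) ^ 2 ≤ 2 * (a + t * b) ^ 2 + 2 * a ^ 2 := by
      nlinarith [sq_nonneg (2 * a + t * b)]
    refine le_of_mul_le_mul_left ?_ ht
    calc t * (t * (η * b ^ 2)) = η * (t * b) ^ 2 := by ring
      _ ≤ 2 * (η * (a + t * b) ^ 2) + 2 * (η * a ^ 2) := by nlinarith
      _ ≤ 2 * (t ^ 2 * (a + t * b) ^ 2) + 2 * (t * (t ^ 2 * g ^ 2 - a ^ 2)) := by
        grw [hradial, hspace, hηt]
      _ = t * (t * (2 * (a + t * b) ^ 2) + 2 * (t ^ 2 * g ^ 2 - a ^ 2)) := by ring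
  refine le_of_mul_le_mul_left ?_ ht
  calc t * (η * (g ^ 2 + b ^ 2))
      ≤ 3 * (t ^ 2 * g ^ 2 - a ^ 2) + t * (2 * (a + t * b) ^ 2) := by linarith
    _ = t * (3 / t * (t ^ 2 * g ^ 2 - a ^ 2) + 2 * (a + t * b) ^ 2) := by field_simp

lemma interiorCutoff_mul_nonneg (V : E × ℝ → ℝ) {η t : ℝ} (hη : 0 < η) (ht : 0 < t) (x : E) :
    0 ≤ interiorCutoff η t x * fderiv ℝ V (x, t) (interiorField V t x, 0) := by
  rcases le_total t ‖x‖ with hx | hx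
  · rw [interiorCutoff_eq_zero hη ht hx, zero_mul]
  · refine mul_nonneg (smoothTransition.nonneg _) ?_
    rw [fderiv_apply_interiorField, sub_nonneg]
    grw [sq_apply_space_le, hx, mul_comm]

lemma IsFreeWave.indicator_energy_le (hV : IsFreeWave V) {C η t : ℝ}
    (hC : ∀ q, |deriv smoothTransition q * q| ≤ C) (hη : 1 ≤ η) (ht : η < t) (x : E) :
    (Metric.ball 0 (t - η)).indicator
        (fun x => η * ‖energyVector (fderiv ℝ V (x, t))‖ ^ 2) x ≤
      3 / t * divergence (virialField V η t) x +
        (3 * (C + Module.finrank ℝ E / 2 + 2) + 2) * controlDensity V (x, t) := by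
  have hη0 : 0 < η := one_pos.trans_le hη
  have ht0 : 0 < t := hη0.trans ht
  have hscaling : scalingDeriv V (x, t) ^ 2 ≤ controlDensity V (x, t) := by
    rw [controlDensity]
    linarith [sq_nonneg (V (x, t)), sq_nonneg ‖energyVector (fderiv ℝ V (x, t))‖,
      sq_nonneg ‖energyVector (fderiv ℝ (scalingDeriv V) (x, t))‖]
  have hvirial : 3 / t * (interiorCutoff η t x * fderiv ℝ V (x, t) (interiorField V t x, 0)) ≤
      3 / t * divergence (virialField V η t) x +
        3 * (C + Module.finrank ℝ E / 2 + 2) * controlDensity V (x, t) := by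
    have h := (abs_le.1 (hV.virial_remainder_le hC hη0 (hη.trans ht.le) x)).1
    calc _ ≤ 3 / t * (divergence (virialField V η t) x +
          t * (C + Module.finrank ℝ E / 2 + 2) * controlDensity V (x, t)) := by gcongr; linarith
      _ = _ := by field_simp
  by_cases hx : x ∈ Metric.ball 0 (t - η)
  · rw [Set.indicator_of_mem hx]
    rw [mem_ball_zero_iff] at hx
    rw [interiorCutoff_eq_one hη0 hx, one_mul] at hvirial
    linarith [ball_energy_density_le (V := V) hη hx]
  · rw [Set.indicator_of_notMem hx]
    have hnonneg : 0 ≤ 3 / t *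
        (interiorCutoff η t x * fderiv ℝ V (x, t) (interiorField V t x, 0)) :=
      mul_nonneg (by positivity) (interiorCutoff_mul_nonneg V hη0 ht0 x)
    linarith [sq_nonneg (scalingDeriv V (x, t))]

lemma ofReal_integral_le_lintegral_ofReal {α : Type*} [MeasurableSpace α] {ν : Measure α}
    {f : α → ℝ} (hf : Integrable f ν) :
    ENNReal.ofReal (∫ x, f x ∂ν) ≤ ∫⁻ x, ENNReal.ofReal (f x) ∂ν := by
  grw [integral_mono hf hf.pos_part fun x => le_max_left (f x) 0,
    ofReal_integral_eq_lintegral_ofReal hf.pos_part (.of_forall fun x => le_max_right (f x) 0)]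
  simp

variable [MeasurableSpace E] [BorelSpace E]

lemma integrable_indicator_ball {μ : Measure E} [IsFiniteMeasureOnCompacts μ] {f : E → ℝ}
    (hf : Continuous f) (r : ℝ) : Integrable ((Metric.ball 0 r).indicator f) μ :=
  (integrable_indicator_iff measurableSet_ball).2
    ((hf.continuousOn.integrableOn_compact (isCompact_closedBall 0 r)).mono_set
      Metric.ball_subset_closedBall)

lemma ofReal_mul_energyNorm_restrict_ball_sq (μ : Measure E) {η : ℝ} (hη : 0 ≤ η) (r t : ℝ) :
    ENNReal.ofReal η * energyNorm (μ.restrict (Metric.ball 0 r)) V t ^ 2 =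
      ∫⁻ x, ENNReal.ofReal ((Metric.ball 0 r).indicator
        (fun x => η * ‖energyVector (fderiv ℝ V (x, t))‖ ^ 2) x) ∂μ := by
  simp_rw [energyNorm_sq, ← lintegral_const_mul' _ _ ENNReal.ofReal_ne_top,
    ← ENNReal.ofReal_mul hη, ← lintegral_indicator measurableSet_ball]
  refine lintegral_congr fun x => ?_
  exact congrFun (Set.indicator_comp_of_zero ENNReal.ofReal_zero) x

theorem exists_ball_energyNorm_sq_le (μ : Measure E) [μ.IsAddHaarMeasure] :
    ∃ K : ℝ, ∀ (V : E × ℝ → ℝ), IsFreeWave V → ∀ ⦃η t : ℝ⦄, 1 ≤ η → η < t →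
      ENNReal.ofReal η * energyNorm (μ.restrict (Metric.ball 0 (t - η))) V t ^ 2 ≤
        ENNReal.ofReal K * ∫⁻ x, ENNReal.ofReal (controlDensity V (x, t)) ∂μ := by
  obtain ⟨C, hC⟩ := exists_abs_deriv_smoothTransition_mul_le
  refine ⟨3 * (C + Module.finrank ℝ E / 2 + 2) + 2, fun V hV η t hη ht => ?_⟩
  set K := 3 * (C + Module.finrank ℝ E / 2 + 2) + 2
  have hK : 0 ≤ K := by
    have hC0 : 0 ≤ C := (abs_nonneg _).trans (hC 0)
    positivity
  set B : Set E := Metric.ball 0 (t - η)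
  set f : E → ℝ := B.indicator fun x => η * ‖energyVector (fderiv ℝ V (x, t))‖ ^ 2
  set X := virialField V η t
  have hf0 : 0 ≤ f := Set.indicator_nonneg fun x _ => by positivity
  have hX : ContDiff ℝ 1 X := contDiff_virialField hV.contDiff η t
  have hXc : HasCompactSupport X := hasCompactSupport_virialField (by linarith) (by linarith) V
  have hdivX : Integrable (fun x => 3 / t * divergence X x) μ :=
    ((continuous_divergence hX).integrable_of_hasCompactSupport
      (hasCompactSupport_divergence hXc)).const_mul _
  have hf : Integrable f μ := integrable_indicator_ball (continuous_const.mul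
    ((contDiff_norm_energyVector_sq hV.contDiff).continuous.comp (Continuous.prodMk_left t))) _
  calc ENNReal.ofReal η * energyNorm (μ.restrict B) V t ^ 2
      = ∫⁻ x, ENNReal.ofReal (f x) ∂μ :=
        ofReal_mul_energyNorm_restrict_ball_sq μ (zero_le_one.trans hη) _ t
    _ = ENNReal.ofReal (∫ x, (f x - 3 / t * divergence X x) ∂μ) := by
        rw [integral_sub hf hdivX, integral_const_mul, integral_divergence_eq_zero hX hXc, mul_zero,
          sub_zero, ofReal_integral_eq_lintegral_ofReal hf (.of_forall hf0)]
    _ ≤ ∫⁻ x, ENNReal.ofReal (f x - 3 / t * divergence X x) ∂μ :=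
        ofReal_integral_le_lintegral_ofReal (hf.sub hdivX)
    _ ≤ ∫⁻ x, ENNReal.ofReal K * ENNReal.ofReal (controlDensity V (x, t)) ∂μ := by
        gcongr with x
        rw [← ENNReal.ofReal_mul hK]
        gcongr
        exact sub_le_iff_le_add'.2 (hV.indicator_energy_le hC hη ht x)
    _ = _ := lintegral_const_mul' _ _ ENNReal.ofReal_ne_top

end InteriorEstimate

section SliceNorm

variable {E : Type*} [MeasurableSpace E] {μ : Measure E} {U W : E × ℝ → ℝ}

/-- The `L²(μ)` norm of `U` at time `t`. -/
noncomputable def sliceNorm (μ : Measure E) (U : E × ℝ → ℝ) (t : ℝ) : ℝ≥0∞ :=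
  eLpNorm (fun x => U (x, t)) 2 μ

lemma sliceNorm_sq (μ : Measure E) (U : E × ℝ → ℝ) (t : ℝ) :
    sliceNorm μ U t ^ 2 = ∫⁻ x, ENNReal.ofReal (U (x, t) ^ 2) ∂μ := by
  simpa [sliceNorm, ENNReal.ofReal_pow, ← ofReal_norm, ← ENNReal.ofReal_pow] using
    eLpNorm_nnreal_pow_eq_lintegral (μ := μ) (f := fun x => U (x, t)) (two_ne_zero (α := ℝ≥0))

lemma sliceNorm_const_smul (c : ℝ) (U : E × ℝ → ℝ) (t : ℝ) :
    sliceNorm μ (fun z => c • U z) t = ‖c‖ₑ * sliceNorm μ U t :=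
  eLpNorm_const_smul c (fun x => U (x, t)) 2 μ

variable [TopologicalSpace E] [OpensMeasurableSpace E]

lemma sliceNorm_sub_le (hU : Continuous U) (hW : Continuous W) (t : ℝ) :
    sliceNorm μ (fun z => U z - W z) t ≤ sliceNorm μ U t + sliceNorm μ W t :=
  eLpNorm_sub_le (f := fun x => U (x, t)) (g := fun x => W (x, t))
    (hU.comp (Continuous.prodMk_left t)).aestronglyMeasurable
    (hW.comp (Continuous.prodMk_left t)).aestronglyMeasurable one_le_two

lemma sliceNorm_intervalIntegral_le [SecondCountableTopology E] [SFinite μ]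
    {F : (E × ℝ) × ℝ → ℝ} (hF : Continuous F) {t : ℝ} {C : ℝ≥0∞}
    (hC : ∀ s ∈ Set.Icc (0 : ℝ) 1, sliceNorm μ (fun z => F (z, s)) t ≤ C) :
    sliceNorm μ (fun z => ∫ s in 0..1, F (z, s)) t ≤ C :=
  eLpNorm_intervalIntegral_le one_le_two (F := fun x s => F ((x, t), s)) (by fun_prop) hC

end SliceNorm

section ScalingAverage

variable {H : Type*} [NormedAddCommGroup H] [NormedSpace ℝ H]

lemma sub_eq_intervalIntegral_fderiv {G : Type*} [NormedAddCommGroup G] [NormedSpace ℝ G]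
    [CompleteSpace G] {f : H → G} (hf : ContDiff ℝ 1 f) (z v : H) :
    f (z + v) - f z = ∫ s in (0 : ℝ)..1, fderiv ℝ f (z + s • v) v := by
  have hderiv (s : ℝ) : HasDerivAt (fun s : ℝ => f (z + s • v)) (fderiv ℝ f (z + s • v) v) s :=
    ((hf.differentiable one_ne_zero _).hasFDerivAt).comp_hasDerivAt s
      (by simpa using ((hasDerivAt_id s).smul_const v).const_add z)
  have hcont : Continuous fun s : ℝ => fderiv ℝ f (z + s • v) v :=
    ((hf.continuous_fderiv one_ne_zero).comp (by fun_prop)).clm_apply continuous_const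
  rw [intervalIntegral.integral_eq_sub_of_hasDerivAt (fun s _ => hderiv s)
    (hcont.intervalIntegrable 0 1)]
  simp

lemma continuous_fderiv_slice {G : Type*} [NormedAddCommGroup G] [NormedSpace ℝ G]
    {F : H × ℝ → G} (hF : ContDiff ℝ 1 F) :
    Continuous fun p : H × ℝ => fderiv ℝ (fun z => F (z, p.2)) p.1 := by
  simp_rw [fun p : H × ℝ => (hasFDerivAt_slice (hF.differentiable one_ne_zero) p.1 p.2).fderiv]
  exact (hF.continuous_fderiv one_ne_zero).clm_comp continuous_const

lemma map_fderiv_intervalIntegral [LocallyCompactSpace H] {G V : Type*} [NormedAddCommGroup G]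
    [NormedSpace ℝ G] [CompleteSpace G] [NormedAddCommGroup V] [NormedSpace ℝ V] [CompleteSpace V]
    (L : (H →L[ℝ] G) →L[ℝ] V) {F : H × ℝ → G} (hF : ContDiff ℝ 1 F) (a b : ℝ) (z : H) :
    L (fderiv ℝ (fun z => ∫ s in a..b, F (z, s)) z) =
      ∫ s in a..b, L (fderiv ℝ (fun z => F (z, s)) z) := by
  rw [fderiv_intervalIntegral hF]
  exact (L.intervalIntegral_comp_comm (((continuous_fderiv_slice hF).comp
    (Continuous.prodMk_right z)).intervalIntegrable a b)).symm

lemma fderiv_comp_smul_sub {G : Type*} [NormedAddCommGroup G] [NormedSpace ℝ G] {f : H → G}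
    (hf : Differentiable ℝ f) (c : ℝ) (z : H) :
    fderiv ℝ (fun z => f (c • z) - f z) z =
      c • (fderiv ℝ f (c • z) - fderiv ℝ f z) + (c - 1) • fderiv ℝ f z := by
  have hfc : Differentiable ℝ fun z => f (c • z) := hf.comp (differentiable_id.const_smul c)
  rw [fderiv_fun_sub (hfc z) (hf z), fderiv_comp_smul]
  module

/-- The average of the dilates `z ↦ W (eᵟˢ z)` over `0 ≤ s ≤ 1`. -/
noncomputable def scalingAverage (W : H → ℝ) (δ : ℝ) (z : H) : ℝ :=
  ∫ s in (0 : ℝ)..1, W (rexp (δ * s) • z)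

lemma scalingDeriv_scalingAverage [LocallyCompactSpace H] {W : H → ℝ} (hW : ContDiff ℝ 1 W)
    {δ : ℝ} (hδ : δ ≠ 0) (z : H) :
    scalingDeriv (scalingAverage W δ) z = δ⁻¹ • (W (rexp δ • z) - W z) := by
  have hF : ContDiff ℝ 1 fun p : H × ℝ => W (rexp (δ * p.2) • p.1) := hW.comp (by fun_prop)
  have hderiv (s : ℝ) : HasDerivAt (fun s => W (rexp (δ * s) • z))
      (δ * fderiv ℝ (fun y => W (rexp (δ * s) • y)) z z) s := by
    have hexp : HasDerivAt (fun s => rexp (δ * s) • z) (δ • rexp (δ * s) • z) s := by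
      simpa [mul_comm, mul_smul] using (((hasDerivAt_id s).const_mul δ).exp).smul_const z
    have h := (hW.differentiable one_ne_zero _).hasFDerivAt.comp_hasDerivAt s hexp
    rw [map_smul, map_smul] at h
    rwa [fderiv_comp_smul, _root_.smul_apply]
  have hcont : Continuous fun s => fderiv ℝ (fun y => W (rexp (δ * s) • y)) z z :=
    ((continuous_fderiv_slice hF).comp (Continuous.prodMk_right z)).clm_apply continuous_const
  have hftc := intervalIntegral.integral_eq_sub_of_hasDerivAt (fun s _ => hderiv s)
    ((hcont.const_mul δ).intervalIntegrable 0 1)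
  have hint : IntervalIntegrable (fun s => fderiv ℝ (fun y => W (rexp (δ * s) • y)) z) volume 0 1 :=
    ((continuous_fderiv_slice hF).comp (Continuous.prodMk_right z)).intervalIntegrable 0 1
  rw [intervalIntegral.integral_const_mul] at hftc
  rw [eq_inv_smul_iff₀ hδ, scalingDeriv, funext fun z => scalingAverage.eq_1 W δ z,
    fderiv_intervalIntegral hF, ContinuousLinearMap.intervalIntegral_apply hint]
  simpa using hftc

lemma isFreeWave_scalingAverage {E : Type*} [NormedAddCommGroup E] [InnerProductSpace ℝ E]
    [FiniteDimensional ℝ E] {W : E × ℝ → ℝ} (hW : IsFreeWave W) (δ : ℝ) :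
    IsFreeWave (scalingAverage W δ) :=
  .intervalIntegral (F := fun p => W (rexp (δ * p.2) • p.1)) (hW.contDiff.comp (by fun_prop))
    (fun s => hW.comp_smul (rexp (δ * s))) 0 1

end ScalingAverage

section EnergyNormApproximation

variable {E : Type*} [NormedAddCommGroup E] [InnerProductSpace ℝ E] [FiniteDimensional ℝ E]
  [MeasurableSpace E] [BorelSpace E] {μ : Measure E} {U W : E × ℝ → ℝ}

lemma energyNorm_intervalIntegral_le [SFinite μ] {F : (E × ℝ) × ℝ → ℝ} (hF : ContDiff ℝ 1 F) {t : ℝ}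
    {C : ℝ≥0∞} (hC : ∀ s ∈ Set.Icc (0 : ℝ) 1, energyNorm μ (fun z => F (z, s)) t ≤ C) :
    energyNorm μ (fun z => ∫ s in 0..1, F (z, s)) t ≤ C := by
  have hcont : Continuous fun p : E × ℝ =>
      energyVector (fderiv ℝ (fun z => F (z, p.2)) (p.1, t)) :=
    energyVector.continuous.comp ((continuous_fderiv_slice hF).comp
      (g := fun p : (E × ℝ) × ℝ => fderiv ℝ (fun z => F (z, p.2)) p.1)
      (f := fun p : E × ℝ => ((p.1, t), p.2)) (by fun_prop))
  unfold energyNorm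
  simp_rw [map_fderiv_intervalIntegral energyVector hF]
  exact eLpNorm_intervalIntegral_le one_le_two hcont hC

lemma energyNorm_comp_smul_sub_le (hW : ContDiff ℝ 1 W) (c : ℝ) :
    energyNorm μ (fun z => W (c • z) - W z) 0 ≤
      ‖c‖ₑ * eLpNorm (fun x => energyVector (fderiv ℝ W (c • x, 0)) -
        energyVector (fderiv ℝ W (x, 0))) 2 μ + ‖c - 1‖ₑ * energyNorm μ W 0 := by
  have hG : Continuous fun x => energyVector (fderiv ℝ W (x, 0)) :=
    (continuous_energyVector_fderiv hW).comp (by fun_prop)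
  have hGc : Continuous fun x => energyVector (fderiv ℝ W (c • x, 0)) :=
    (continuous_energyVector_fderiv hW).comp (by fun_prop)
  simp_rw [energyNorm, fderiv_comp_smul_sub (hW.differentiable one_ne_zero), map_add, map_smul,
    map_sub, Prod.smul_mk, smul_zero]
  refine (eLpNorm_add_le ((hGc.sub hG).const_smul c).aestronglyMeasurable
    (hG.const_smul (c - 1)).aestronglyMeasurable one_le_two).trans ?_
  exact add_le_add eLpNorm_const_smul_le eLpNorm_const_smul_le

variable [μ.IsAddHaarMeasure]

lemma sliceNorm_comp_smul_le (hU : Continuous U) {c : ℝ} (hc : 1 ≤ c) (t : ℝ) :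
    sliceNorm μ (fun z => U (c • z)) t ≤ sliceNorm μ U (c * t) :=
  eLpNorm_comp_smul_le (hU.comp (Continuous.prodMk_left (c * t))).aestronglyMeasurable 2 hc

lemma sliceNorm_comp_add_right_sub_le (hU : ContDiff ℝ 1 U) (a : E) (t : ℝ) :
    sliceNorm μ (fun z => U (z + (a, 0)) - U z) t ≤ ‖a‖ₑ * energyNorm μ U t := by
  have hcont : Continuous fun p : (E × ℝ) × ℝ => fderiv ℝ U (p.1 + p.2 • (a, 0)) (a, 0) :=
    ((hU.continuous_fderiv one_ne_zero).comp (by fun_prop)).clm_apply continuous_const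
  simp_rw [sub_eq_intervalIntegral_fderiv hU]
  refine sliceNorm_intervalIntegral_le hcont fun s _ => ?_
  rw [← energyNorm_comp_add_right hU (s • a) t]
  unfold sliceNorm energyNorm
  rw [← ofReal_norm]
  refine eLpNorm_le_mul_eLpNorm_of_ae_le_mul (.of_forall fun x => ?_) 2
  rw [fderiv_comp_add_right, mul_comm, norm_eq_abs]
  have h : (x, t) + (s • a, 0) = (x, t) + s • (a, (0 : ℝ)) := by simp
  rw [h]
  exact abs_apply_space_le _ a

lemma tendsto_energyNorm_comp_smul_sub (hW : ContDiff ℝ 1 W) (hfin : energyNorm μ W 0 ≠ ∞) :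
    Tendsto (fun c : ℝ => energyNorm μ (fun z => W (c • z) - W z) 0) (𝓝[≥] 1) (𝓝 0) := by
  have henorm {φ : ℝ → ℝ} (hφ : Continuous φ) :
      Tendsto (fun c => ‖φ c‖ₑ) (𝓝[≥] 1) (𝓝 ‖φ 1‖ₑ) :=
    (hφ.enorm.tendsto 1).mono_left nhdsWithin_le_nhds
  have hG := tendsto_eLpNorm_comp_smul_sub (by simp)
    ⟨aestronglyMeasurable_energyVector_fderiv (μ := μ) hW 0, hfin.lt_top⟩
  have hlim := (ENNReal.Tendsto.mul (henorm continuous_id) (.inr ENNReal.zero_ne_top) hG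
    (.inr (by simp))).add (ENNReal.Tendsto.mul_const (henorm (continuous_sub_right 1)) (.inr hfin))
  exact tendsto_of_tendsto_of_tendsto_of_le_of_le tendsto_const_nhds (by simpa using hlim)
    (fun c => zero_le) fun c => energyNorm_comp_smul_sub_le hW c

end EnergyNormApproximation

section Approximation

variable {E : Type*} [NormedAddCommGroup E] [InnerProductSpace ℝ E] [FiniteDimensional ℝ E]
  [MeasurableSpace E] [BorelSpace E] {μ : Measure E} {U V W : E × ℝ → ℝ}

lemma lintegral_controlDensity (hV : ContDiff ℝ 2 V) (t : ℝ) :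
    ∫⁻ x, ENNReal.ofReal (controlDensity V (x, t)) ∂μ =
      sliceNorm μ V t ^ 2 + energyNorm μ V t ^ 2 + sliceNorm μ (scalingDeriv V) t ^ 2 +
        energyNorm μ (scalingDeriv V) t ^ 2 := by
  have hS := contDiff_scalingDeriv hV
  have hmeas {f : E × ℝ → ℝ} (hf : Continuous f) :
      Measurable fun x => ENNReal.ofReal (f (x, t) ^ 2) := by fun_prop
  have := hmeas (continuous_energyVector_fderiv (hV.of_le one_le_two)).norm
  simp only [sliceNorm_sq, energyNorm_sq]
  rw [← lintegral_add_left (hmeas hV.continuous), ← lintegral_add_left (by fun_prop),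
    ← lintegral_add_left (by fun_prop)]
  refine lintegral_congr fun x => ?_
  rw [controlDensity, ENNReal.ofReal_add (by positivity) (by positivity),
    ENNReal.ofReal_add (by positivity) (by positivity),
    ENNReal.ofReal_add (by positivity) (by positivity)]

lemma energyNorm_ne_top_of_sub (hU : ContDiff ℝ 1 U) (hV : ContDiff ℝ 1 V) {t : ℝ}
    (hUfin : energyNorm μ U t ≠ ∞) (hUV : energyNorm μ (fun z => U z - V z) t ≠ ∞) :
    energyNorm μ V t ≠ ∞ := by
  have h := energyNorm_sub_le (μ := μ) hU (hU.sub hV) t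
  simp only [sub_sub_cancel] at h
  exact ne_top_of_le_ne_top (by finiteness) h

variable [μ.IsAddHaarMeasure]

lemma IsFreeWave.exists_energyNorm_le_three_quarters [Nontrivial E] (hU : IsFreeWave U)
    (hfin : energyNorm μ U 0 ≠ ∞) :
    ∃ M, IsFreeWave M ∧ energyNorm μ M 0 ≤ (3 / 4 : ℝ≥0) * energyNorm μ U 0 ∧
      ∃ C ≠ ∞, ∀ t, sliceNorm μ (fun z => M z - U z) t ≤ C := by
  have hU₁ : ContDiff ℝ 1 U := hU.contDiff.of_le one_le_two
  have hUd := hU₁.differentiable one_ne_zero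
  obtain ⟨a, ha⟩ := exists_eLpNorm_add_comp_add_right_le (E := E)
    ⟨aestronglyMeasurable_energyVector_fderiv (μ := μ) hU₁ 0, hfin.lt_top⟩
  have hUa := hU.comp_add_right (a, 0)
  refine ⟨fun z => (2⁻¹ : ℝ) • (U z + U (z + (a, 0))), (hU.add hUa).const_smul 2⁻¹, ?_,
    ‖(2⁻¹ : ℝ)‖ₑ * (‖a‖ₑ * energyNorm μ U 0), by finiteness, fun t => ?_⟩
  · have hsum : energyNorm μ (fun z => U z + U (z + (a, 0))) 0 ≤
        (3 / 2 : ℝ≥0) * energyNorm μ U 0 := by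
      simp_rw [energyNorm, fun x => fderiv_fun_add (hUd (x, 0)) (hUa.contDiff.differentiable
        two_ne_zero (x, 0)), fderiv_comp_add_right, map_add, Prod.mk_add_mk, add_zero]
      exact ha
    rw [energyNorm_const_smul ((hU.add hUa).contDiff.differentiable two_ne_zero)]
    grw [hsum, ← mul_assoc, enorm_eq_nnnorm, ← ENNReal.coe_mul]
    gcongr
    rw [← NNReal.coe_le_coe]
    norm_num
  · have hdiff : (fun z => (2⁻¹ : ℝ) • (U z + U (z + (a, 0))) - U z) =
        fun z => (2⁻¹ : ℝ) • (U (z + (a, 0)) - U z) := by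
      ext z
      module
    rw [hdiff, sliceNorm_const_smul]
    grw [sliceNorm_comp_add_right_sub_le hU₁ a t, hU.energyNorm_eq t 0]

lemma IsFreeWave.exists_energyNorm_le_pow [Nontrivial E] (hU : IsFreeWave U)
    (hfin : energyNorm μ U 0 ≠ ∞) (n : ℕ) :
    ∃ M, IsFreeWave M ∧ energyNorm μ M 0 ≤ ((3 / 4 : ℝ≥0) : ℝ≥0∞) ^ n * energyNorm μ U 0 ∧
      ∃ C ≠ ∞, ∀ t, sliceNorm μ (fun z => U z - M z) t ≤ C := by
  induction n with
  | zero => exact ⟨U, hU, by simp, 0, by simp, fun t => by simp [sliceNorm]⟩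
  | succ n ih =>
    obtain ⟨M, hM, hMle, C, hC, hMC⟩ := ih
    obtain ⟨M', hM', hM'le, C', hC', hM'C⟩ := hM.exists_energyNorm_le_three_quarters
      (ne_top_of_le_ne_top (by finiteness) hMle)
    refine ⟨M', hM', ?_, C + C', by finiteness, fun t => ?_⟩
    · grw [hM'le, hMle, pow_succ', mul_assoc]
    · have hsplit : (fun z => U z - M' z) = fun z => (U z - M z) - (M' z - M z) := by
        ext z
        ring
      rw [hsplit]
      grw [sliceNorm_sub_le (hU.sub hM).contDiff.continuous (hM'.sub hM).contDiff.continuous, hMC,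
        hM'C]

lemma IsFreeWave.exists_approx_sliceNorm_le [Nontrivial E] (hU : IsFreeWave U)
    (hfin : energyNorm μ U 0 ≠ ∞) {ε : ℝ≥0∞} (hε : ε ≠ 0) :
    ∃ W, IsFreeWave W ∧ energyNorm μ (fun z => U z - W z) 0 ≤ ε ∧
      ∃ C ≠ ∞, ∀ t, sliceNorm μ W t ≤ C := by
  have hlim : Tendsto (fun n : ℕ => ((3 / 4 : ℝ≥0) : ℝ≥0∞) ^ n * energyNorm μ U 0) atTop (𝓝 0) := by
    simpa using ENNReal.Tendsto.mul_const
      (ENNReal.tendsto_pow_atTop_nhds_zero_of_lt_one (r := (3 / 4 : ℝ≥0))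
        (by exact_mod_cast (by norm_num [div_lt_one] : (3 / 4 : ℝ≥0) < 1))) (.inr hfin)
  obtain ⟨n, hn⟩ := (hlim.eventually_le_const (pos_iff_ne_zero.2 hε)).exists
  obtain ⟨M, hM, hMn, hMC⟩ := hU.exists_energyNorm_le_pow hfin n
  exact ⟨fun z => U z - M z, hU.sub hM, by simpa using hMn.trans hn, hMC⟩

lemma IsFreeWave.exists_energyNorm_scalingAverage_sub_le (hW : IsFreeWave W)
    (hfin : energyNorm μ W 0 ≠ ∞) {ε : ℝ≥0∞} (hε : ε ≠ 0) :
    ∃ δ > 0, energyNorm μ (fun z => scalingAverage W δ z - W z) 0 ≤ ε := by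
  have hW₁ : ContDiff ℝ 1 W := hW.contDiff.of_le one_le_two
  obtain ⟨b, hb, hbε⟩ : ∃ b > 1, ∀ c ∈ Set.Icc 1 b,
      energyNorm μ (fun z => W (c • z) - W z) 0 ≤ ε :=
    mem_nhdsGE_iff_exists_Icc_subset.1
      ((tendsto_energyNorm_comp_smul_sub hW₁ hfin).eventually_le_const (pos_iff_ne_zero.2 hε))
  refine ⟨log b, log_pos hb, ?_⟩
  have hF : ContDiff ℝ 1 fun p : (E × ℝ) × ℝ => W (rexp (log b * p.2) • p.1) - W p.1 :=
    (hW₁.comp (by fun_prop)).sub (hW₁.comp contDiff_fst)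
  have hsub : (fun z => scalingAverage W (log b) z - W z) =
      fun z => ∫ s in (0 : ℝ)..1, (W (rexp (log b * s) • z) - W z) := by
    ext z
    have hint : IntervalIntegrable (fun s => W (rexp (log b * s) • z)) volume 0 1 :=
      (hW₁.continuous.comp (by fun_prop)).intervalIntegrable 0 1
    rw [intervalIntegral.integral_sub hint intervalIntegrable_const]
    simp [scalingAverage]
  have hbound : ∀ s ∈ Set.Icc (0 : ℝ) 1,
      energyNorm μ (fun z => W (rexp (log b * s) • z) - W z) 0 ≤ ε := fun s hs => by
    refine hbε _ ⟨one_le_exp (mul_nonneg (log_pos hb).le hs.1), ?_⟩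
    rw [← le_log_iff_exp_le (zero_lt_one.trans hb)]
    exact mul_le_of_le_one_right (log_pos hb).le hs.2
  rw [hsub]
  exact energyNorm_intervalIntegral_le hF hbound

lemma sliceNorm_scalingAverage_le (hW : Continuous W) {C : ℝ≥0∞} (hC : ∀ t, sliceNorm μ W t ≤ C)
    {δ : ℝ} (hδ : 0 ≤ δ) (t : ℝ) : sliceNorm μ (scalingAverage W δ) t ≤ C :=
  sliceNorm_intervalIntegral_le (F := fun p => W (rexp (δ * p.2) • p.1)) (by fun_prop)
    fun s hs => (sliceNorm_comp_smul_le hW (one_le_exp (mul_nonneg hδ hs.1)) t).trans (hC _)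

lemma IsFreeWave.exists_lintegral_controlDensity_scalingAverage_le (hW : IsFreeWave W)
    (hfin : energyNorm μ W 0 ≠ ∞) {C : ℝ≥0∞} (hC : C ≠ ∞) (hWC : ∀ t, sliceNorm μ W t ≤ C)
    {δ : ℝ} (hδ : 0 < δ) (hVfin : energyNorm μ (scalingAverage W δ) 0 ≠ ∞) :
    ∃ D ≠ ∞, ∀ t,
      ∫⁻ x, ENNReal.ofReal (controlDensity (scalingAverage W δ) (x, t)) ∂μ ≤ D := by
  have hW₁ : ContDiff ℝ 1 W := hW.contDiff.of_le one_le_two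
  have hc : 1 ≤ rexp δ := one_le_exp hδ.le
  have hWd := hW.comp_smul (rexp δ)
  have hV := isFreeWave_scalingAverage hW δ
  have hS : scalingDeriv (scalingAverage W δ) = fun z => δ⁻¹ • (W (rexp δ • z) - W z) :=
    funext fun z => scalingDeriv_scalingAverage hW₁ hδ.ne' z
  have hSwave : IsFreeWave (scalingDeriv (scalingAverage W δ)) :=
    hS ▸ (hWd.sub hW).const_smul δ⁻¹
  have hSslice (t : ℝ) :
      sliceNorm μ (scalingDeriv (scalingAverage W δ)) t ≤ ‖δ⁻¹‖ₑ * (C + C) := by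
    rw [hS, sliceNorm_const_smul]
    grw [sliceNorm_sub_le hWd.contDiff.continuous hW.contDiff.continuous,
      sliceNorm_comp_smul_le hW.contDiff.continuous hc, hWC, hWC]
  have hSenergy : energyNorm μ (scalingDeriv (scalingAverage W δ)) 0 ≤
      ‖δ⁻¹‖ₑ * (‖rexp δ‖ₑ * energyNorm μ W 0 + energyNorm μ W 0) := by
    rw [hS, energyNorm_const_smul ((hWd.sub hW).contDiff.differentiable two_ne_zero)]
    grw [energyNorm_sub_le (hWd.contDiff.of_le one_le_two) hW₁, energyNorm_comp_smul_le hW₁ hc,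
      mul_zero]
  refine ⟨C ^ 2 + energyNorm μ (scalingAverage W δ) 0 ^ 2 + (‖δ⁻¹‖ₑ * (C + C)) ^ 2 +
    (‖δ⁻¹‖ₑ * (‖rexp δ‖ₑ * energyNorm μ W 0 + energyNorm μ W 0)) ^ 2, by finiteness, fun t => ?_⟩
  rw [lintegral_controlDensity hV.contDiff, hV.energyNorm_eq t 0, hSwave.energyNorm_eq t 0]
  grw [sliceNorm_scalingAverage_le hW.contDiff.continuous hWC hδ.le, hSslice, hSenergy]

theorem IsFreeWave.exists_approx_controlDensity_le [Nontrivial E] (hU : IsFreeWave U)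
    (hfin : energyNorm μ U 0 ≠ ∞) {ε : ℝ≥0∞} (hε : ε ≠ 0) (hε' : ε ≠ ∞) :
    ∃ V, IsFreeWave V ∧ energyNorm μ (fun z => U z - V z) 0 ≤ ε ∧
      ∃ C ≠ ∞, ∀ t, ∫⁻ x, ENNReal.ofReal (controlDensity V (x, t)) ∂μ ≤ C := by
  have hfin_of_le {V : E × ℝ → ℝ} (hV : IsFreeWave V)
      (hUV : energyNorm μ (fun z => U z - V z) 0 ≤ ε) : energyNorm μ V 0 ≠ ∞ :=
    energyNorm_ne_top_of_sub (hU.contDiff.of_le one_le_two) (hV.contDiff.of_le one_le_two) hfin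
      (ne_top_of_le_ne_top hε' hUV)
  have hε2 : ε / 2 ≠ 0 := by simpa using hε
  obtain ⟨W, hW, hUW, C, hC, hWC⟩ := hU.exists_approx_sliceNorm_le hfin hε2
  have hWfin := hfin_of_le hW (hUW.trans ENNReal.half_le_self)
  obtain ⟨δ, hδ, hVW⟩ := hW.exists_energyNorm_scalingAverage_sub_le hWfin hε2
  have hV := isFreeWave_scalingAverage hW δ
  have hUV : energyNorm μ (fun z => U z - scalingAverage W δ z) 0 ≤ ε := by
    have hsplit : (fun z => U z - scalingAverage W δ z) =
        fun z => (U z - W z) - (scalingAverage W δ z - W z) := by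
      ext z
      ring
    rw [hsplit]
    grw [energyNorm_sub_le ((hU.sub hW).contDiff.of_le one_le_two)
      ((hV.sub hW).contDiff.of_le one_le_two), hUW, hVW, ENNReal.add_halves]
  exact ⟨scalingAverage W δ, hV, hUV, hW.exists_lintegral_controlDensity_scalingAverage_le hWfin hC
    hWC hδ (hfin_of_le hV hUV)⟩

theorem IsFreeWave.eventually_energyNorm_ball_le [Nontrivial E] (hU : IsFreeWave U)
    (hfin : energyNorm μ U 0 ≠ ∞) {ε : ℝ≥0∞} (hε : ε ≠ 0) (hε' : ε ≠ ∞) :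
    ∀ᶠ η in atTop, ∀ t > η, energyNorm (μ.restrict (Metric.ball 0 (t - η))) U t ≤ ε := by
  have hε2 : ε / 2 ≠ 0 := by simpa using hε
  obtain ⟨V, hV, hUV, C, hC, hVC⟩ := hU.exists_approx_controlDensity_le hfin hε2
    (ENNReal.div_ne_top hε' two_ne_zero)
  obtain ⟨K, hK⟩ := exists_ball_energyNorm_sq_le μ
  have hdecay : ∀ᶠ η in atTop, ENNReal.ofReal K * C ≤ ENNReal.ofReal η * (ε / 2) ^ 2 := by
    have hlim := ENNReal.Tendsto.mul_const (b := (ε / 2) ^ 2) ENNReal.tendsto_ofReal_atTop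
      (.inl ENNReal.top_ne_zero)
    rw [ENNReal.top_mul (pow_ne_zero 2 hε2)] at hlim
    exact hlim.eventually_const_le (ENNReal.mul_lt_top ENNReal.ofReal_lt_top hC.lt_top)
  filter_upwards [hdecay, eventually_ge_atTop 1] with η hη hη1 t ht
  have hVball : energyNorm (μ.restrict (Metric.ball 0 (t - η))) V t ≤ ε / 2 := by
    have hη0 : ENNReal.ofReal η ≠ 0 := by simpa using zero_lt_one.trans_le hη1
    rw [← ENNReal.pow_le_pow_left_iff two_ne_zero,
      ← ENNReal.mul_le_mul_iff_right hη0 ENNReal.ofReal_ne_top]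
    grw [hK V hV hη1 ht, hVC t, hη]
  have hUVball : energyNorm (μ.restrict (Metric.ball 0 (t - η))) (fun z => U z - V z) t ≤ ε / 2 :=
    calc _ ≤ energyNorm μ (fun z => U z - V z) t := eLpNorm_mono_measure _ Measure.restrict_le_self
      _ = energyNorm μ (fun z => U z - V z) 0 := (hU.sub hV).energyNorm_eq t 0
      _ ≤ ε / 2 := hUV
  have h := energyNorm_add_le (μ := μ.restrict (Metric.ball 0 (t - η)))
    ((hU.sub hV).contDiff.of_le one_le_two) (hV.contDiff.of_le one_le_two) t
  simp only [sub_add_cancel] at h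
  grw [h, hUVball, hVball, ENNReal.add_halves]

theorem IsFreeWave.tendsto_iSup_energyNorm_ball [Nontrivial E] (hU : IsFreeWave U)
    (hfin : energyNorm μ U 0 ≠ ∞) :
    Tendsto (fun η : ℝ => ⨆ (t : ℝ) (_ : η < t),
      energyNorm (μ.restrict (Metric.ball 0 (t - η))) U t) atTop (𝓝 0) := by
  refine ENNReal.tendsto_nhds_zero.2 fun ε hε => ?_
  obtain ⟨κ, hκ, hκε⟩ := ENNReal.lt_iff_exists_nnreal_btwn.1 hε
  filter_upwards [hU.eventually_energyNorm_ball_le hfin hκ.ne' ENNReal.coe_ne_top] with η hη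
  exact (iSup₂_le hη).trans hκε.le

theorem IsFreeWave.tendsto_iSup_energyNorm_sq_ball [Nontrivial E] (hU : IsFreeWave U)
    (hfin : energyNorm μ U 0 ≠ ∞) :
    Tendsto (fun η : ℝ => ⨆ (t : ℝ) (_ : η < t),
      energyNorm (μ.restrict (Metric.ball 0 (t - η))) U t ^ 2) atTop (𝓝 0) := by
  have hsq := ENNReal.Tendsto.pow (n := 2) (hU.tendsto_iSup_energyNorm_ball hfin)
  rw [zero_pow two_ne_zero] at hsq
  refine tendsto_of_tendsto_of_tendsto_of_le_of_le tendsto_const_nhds hsq (fun _ => zero_le)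
    fun η => iSup₂_le fun t ht => ?_
  gcongr
  exact le_iSup₂ (f := fun t (_ : η < t) =>
    energyNorm (μ.restrict (Metric.ball 0 (t - η))) U t) t ht

end Approximation

section SecondDerivatives

variable {H : Type*} [NormedAddCommGroup H] [NormedSpace ℝ H] {f : H → ℝ} {U : H × ℝ → ℝ}

lemma fderiv_fderiv_apply (hf : ContDiff ℝ 2 f) (x v w : H) :
    fderiv ℝ (fun y => fderiv ℝ f y v) x w = fderiv ℝ (fderiv ℝ f) x w v := by
  simp [fderiv_clm_apply (differentiable_fderiv hf x) (differentiableAt_const v)]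

lemma contDiff_fderiv_apply (hf : ContDiff ℝ 2 f) (v : H) : ContDiff ℝ 1 fun y => fderiv ℝ f y v :=
  (hf.fderiv_right (m := 1) (by norm_num)).clm_apply contDiff_const

lemma fderiv_fderiv_slice_apply (hU : ContDiff ℝ 2 U) (x v : H) (t : ℝ) :
    fderiv ℝ (fun y => fderiv ℝ (fun z => U (z, t)) y v) x v =
      fderiv ℝ (fderiv ℝ U) (x, t) (v, 0) (v, 0) := by
  have hslice (y : H) : fderiv ℝ (fun z => U (z, t)) y v = fderiv ℝ U (y, t) (v, 0) := by
    simp [(hasFDerivAt_slice (hU.differentiable two_ne_zero) y t).fderiv]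
  simp_rw [hslice]
  rw [(hasFDerivAt_slice ((contDiff_fderiv_apply hU (v, 0)).differentiable one_ne_zero) x t).fderiv,
    ← fderiv_fderiv_apply hU]
  simp

lemma deriv_deriv_slice (hU : ContDiff ℝ 2 U) (x : H) (t : ℝ) :
    deriv (fun s => deriv (fun r => U (x, r)) s) t =
      fderiv ℝ (fderiv ℝ U) (x, t) (0, 1) (0, 1) := by
  simp_rw [fun s => (hasDerivAt_slice (hU.differentiable two_ne_zero) x s).deriv]
  rw [(hasDerivAt_slice ((contDiff_fderiv_apply hU (0, 1)).differentiable one_ne_zero) x t).deriv,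
    fderiv_fderiv_apply hU]

end SecondDerivatives

section Classical

open Laplacian

variable {E : Type*} [NormedAddCommGroup E] [InnerProductSpace ℝ E] [FiniteDimensional ℝ E]
  {ι : Type*} [Fintype ι]

lemma laplacian_eq_sum_fderiv {f : E → ℝ} (hf : ContDiff ℝ 2 f) (b : OrthonormalBasis ι ℝ E)
    (x : E) : Δ f x = ∑ i, fderiv ℝ (fun y => fderiv ℝ f y (b i)) x (b i) := by
  simp [InnerProductSpace.laplacian_eq_iteratedFDeriv_orthonormalBasis f b,
    iteratedFDeriv_two_apply, fderiv_fderiv_apply hf]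

lemma laplacian_eq_sum_fderiv_single [DecidableEq ι] {f : EuclideanSpace ℝ ι → ℝ}
    (hf : ContDiff ℝ 2 f) (x : EuclideanSpace ℝ ι) :
    Δ f x = ∑ i, fderiv ℝ (fun y => fderiv ℝ f y (.single i 1)) x (.single i 1) := by
  simpa using laplacian_eq_sum_fderiv hf (EuclideanSpace.basisFun ι ℝ) x

lemma dAlembertian_eq_sum (B : E × ℝ →L[ℝ] E × ℝ →L[ℝ] ℝ) (b : OrthonormalBasis ι ℝ E) :
    dAlembertian B = B (0, 1) (0, 1) - ∑ i, B (b i, 0) (b i, 0) := by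
  rw [dAlembertian_apply, LinearMap.trace_eq_sum_inner _ b]
  congr! 2 with i
  rw [real_inner_comm]
  exact inner_spatialVector _ _

lemma dAlembertian_fderiv_fderiv {U : E × ℝ → ℝ} (hU : ContDiff ℝ 2 U) (x : E) (t : ℝ) :
    dAlembertian (fderiv ℝ (fderiv ℝ U) (x, t)) =
      deriv (fun s => deriv (fun r => U (x, r)) s) t - Δ (fun y => U (y, t)) x := by
  have hslice : ContDiff ℝ 2 fun y => U (y, t) := hU.comp (by fun_prop)
  rw [deriv_deriv_slice hU, laplacian_eq_sum_fderiv hslice (stdOrthonormalBasis ℝ E),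
    dAlembertian_eq_sum _ (stdOrthonormalBasis ℝ E)]
  simp_rw [fun v => fderiv_fderiv_slice_apply hU x v t]

lemma norm_gradient_sq_add_deriv_sq {u : E → ℝ → ℝ} (hu : Differentiable ℝ (Function.uncurry u))
    (x : E) (t : ℝ) :
    ‖gradient (fun y => u y t) x‖ ^ 2 + deriv (u x) t ^ 2 =
      ‖energyVector (fderiv ℝ (Function.uncurry u) (x, t))‖ ^ 2 := by
  rw [norm_energyVector_sq, ← gradient_slice hu, ← (hasDerivAt_slice hu x t).deriv]
  rfl

lemma isFreeWave_uncurry {u : E → ℝ → ℝ} (hu : ContDiff ℝ 2 (Function.uncurry u))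
    (hwave : ∀ x t, deriv (fun s => deriv (u x) s) t - Δ (fun y => u y t) x = 0) :
    IsFreeWave (Function.uncurry u) :=
  ⟨hu, fun z => (dAlembertian_fderiv_fderiv hu z.1 z.2).trans (hwave z.1 z.2)⟩

lemma energyNorm_uncurry_sq [MeasurableSpace E] (μ : Measure E) {u : E → ℝ → ℝ}
    (hu : Differentiable ℝ (Function.uncurry u)) (t : ℝ) :
    energyNorm μ (Function.uncurry u) t ^ 2 =
      ∫⁻ x, ENNReal.ofReal (‖gradient (fun y => u y t) x‖ ^ 2 + deriv (u x) t ^ 2) ∂μ := by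
  simp_rw [energyNorm_sq, norm_gradient_sq_add_deriv_sq hu]

end Classical

end FreeWave

open FreeWave Laplacian in
theorem free_wave_interior_energy_vanishes_general {E : Type*} [NormedAddCommGroup E]
    [InnerProductSpace ℝ E] [FiniteDimensional ℝ E] [Nontrivial E] [MeasurableSpace E]
    [BorelSpace E] (μ : Measure E) [μ.IsAddHaarMeasure] (u : E → ℝ → ℝ)
    (hu : ContDiff ℝ 2 (Function.uncurry u))
    (hwave : ∀ x t, deriv (fun s => deriv (u x) s) t - Δ (fun y => u y t) x = 0)
    (hfinite : Integrable (fun x => ‖gradient (fun y => u y 0) x‖ ^ 2 + deriv (u x) 0 ^ 2) μ) :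
    Tendsto (fun η : ℝ => ⨆ (t : ℝ) (_ : η < t), ∫⁻ x in Metric.ball 0 (t - η),
      ENNReal.ofReal (‖gradient (fun y => u y t) x‖ ^ 2 + deriv (u x) t ^ 2) ∂μ) atTop (𝓝 0) := by
  have hdiff := hu.differentiable two_ne_zero
  have hfin : energyNorm μ (Function.uncurry u) 0 ≠ ∞ := fun h =>
    hfinite.lintegral_lt_top.ne <| by
      rw [← energyNorm_uncurry_sq μ hdiff, h, ENNReal.top_pow two_ne_zero]
  simp_rw [← energyNorm_uncurry_sq _ hdiff]
  exact (isFreeWave_uncurry hu hwave).tendsto_iSup_energyNorm_sq_ball hfin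

/-- Asymptotically, all energy of a finite-energy free wave concentrates near and
outside the light cone: `sup_{t>η} ∫_{|x|<t-η} (|∇u|² + |u_t|²) dx → 0` as `η → +∞`. -/
theorem free_wave_interior_energy_vanishes (d : ℕ) (hd : 3 ≤ d)
    (u : EuclideanSpace ℝ (Fin d) → ℝ → ℝ)
    (hu : ContDiff ℝ 2 (Function.uncurry u))
    (hwave : ∀ (x : EuclideanSpace ℝ (Fin d)) (t : ℝ),
      deriv (fun s => deriv (fun s' => u x s') s) t
        - ∑ i : Fin d, fderiv ℝ (fun y => fderiv ℝ (fun z => u z t) y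
            (EuclideanSpace.single i 1)) x (EuclideanSpace.single i 1) = 0)
    (hfinite : ∀ t : ℝ, Integrable (fun x : EuclideanSpace ℝ (Fin d) =>
      ‖gradient (fun y => u y t) x‖ ^ 2 + (deriv (u x) t) ^ 2))
    (hconserve : ∀ t : ℝ,
      (∫ x : EuclideanSpace ℝ (Fin d),
        (‖gradient (fun y => u y t) x‖ ^ 2 + (deriv (u x) t) ^ 2))
      = ∫ x : EuclideanSpace ℝ (Fin d),
        (‖gradient (fun y => u y 0) x‖ ^ 2 + (deriv (u x) 0) ^ 2)) :
    Tendsto (fun η : ℝ =>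
        ⨆ (t : ℝ) (_ : η < t),
          ∫⁻ x in Metric.ball (0 : EuclideanSpace ℝ (Fin d)) (t - η),
            ENNReal.ofReal (‖gradient (fun y => u y t) x‖ ^ 2 + (deriv (u x) t) ^ 2))
      atTop (nhds 0) := by
  have : Nonempty (Fin d) := ⟨⟨0, by lia⟩⟩
  refine free_wave_interior_energy_vanishes_general volume u hu (fun x t => ?_) (hfinite 0)
  have hslice : ContDiff ℝ 2 fun y => u y t := hu.comp (contDiff_prodMk_left t)
  rw [FreeWave.laplacian_eq_sum_fderiv_single hslice]
  exact hwave x t
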